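/- arXiv:1110.0174 — 7 statements merged into one kernel-verified Lean document; each statement's English description precedes it below -/
import Mathlib

section
/- Let H be a group and let G be a finitely generated group that is fully residually H. Then G embeds into an ultrapower of H: there exist an index set ι, an ultrafilter 𝒰 on ι, and an injective group homomorphism from G into the ultrapower H^𝒰. -/
/-!
For each finite `s ⊆ G` choose a homomorphism `f s : G →* H` that kills no nontrivial element of
`s`. A given `g ≠ 1` belongs to all sufficiently large `s`, so `f s g ≠ 1` for all large `s`. Hence
if `𝒰` is an ultrafilter on the finite subsets of `G` refining `atTop`, then sending `g` to the
germ of `s ↦ f s g` has trivial kernel.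
-/

/-- `G` is fully residually `H`. -/
def FullyResidually (H : Type*) [Group H] (G : Type*) [Group G] : Prop :=
  ∀ s : Finset G, (∀ g ∈ s, g ≠ 1) → ∃ φ : G →* H, ∀ g ∈ s, φ g ≠ 1

open Filter

universe u v

section GermHom

variable {ι M N : Type*} [Monoid N]

/-- The homomorphism into the reduced power `Germ l N` induced by a family of homomorphisms
`f i : M →* N`; it is a homomorphism into an ultrapower when `l` is an ultrafilter. -/
def germHom [MulOneClass M] (l : Filter ι) (f : ι → M →* N) : M →* Germ l N :=
  (Germ.coeMulHom l).comp (MonoidHom.pi f)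

theorem germHom_eq_one_iff [MulOneClass M] {l : Filter ι} {f : ι → M →* N} {x : M} :
    germHom l f x = 1 ↔ ∀ᶠ i in l, f i x = 1 :=
  Germ.coe_eq

theorem germHom_injective_iff [Group M] {l : Filter ι} {f : ι → M →* N} :
    Function.Injective (germHom l f) ↔ ∀ x ≠ 1, ∃ᶠ i in l, f i x ≠ 1 := by
  simp only [injective_iff_map_eq_one, germHom_eq_one_iff, Filter.Frequently, ne_eq, not_not,
    not_imp_not]

end GermHom

namespace FullyResidually

variable {H : Type*} [Group H] {G : Type*} [Group G]

theorem exists_hom_forall_mem (h : FullyResidually H G) (s : Finset G) :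
    ∃ φ : G →* H, ∀ g ∈ s, g ≠ 1 → φ g ≠ 1 := by
  classical
  obtain ⟨φ, hφ⟩ := h (s.erase 1) fun _ hg => Finset.ne_of_mem_erase hg
  exact ⟨φ, fun g hg hg_ne => hφ g (Finset.mem_erase.mpr ⟨hg_ne, hg⟩)⟩

theorem exists_homs_eventually_ne_one (h : FullyResidually H G) :
    ∃ f : Finset G → G →* H, ∀ g ≠ 1, ∀ᶠ s in atTop, f s g ≠ 1 := by
  choose f hf using h.exists_hom_forall_mem
  refine ⟨f, fun g hg_ne => ?_⟩
  filter_upwards [eventually_ge_atTop {g}] with s hs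
  exact hf s g (Finset.singleton_subset_iff.mp hs) hg_ne

end FullyResidually

theorem fully_residually_embeds_in_ultrapower_general
    (H : Type v) [Group H] (G : Type u) [Group G] (hres : FullyResidually H G) :
    ∃ (ι : Type u) (𝒰 : Ultrafilter ι) (φ : G →* Germ (𝒰 : Filter ι) H),
      Function.Injective φ := by
  obtain ⟨f, hf⟩ := hres.exists_homs_eventually_ne_one
  let 𝒰 : Ultrafilter (Finset G) := Ultrafilter.of atTop
  refine ⟨Finset G, 𝒰, germHom 𝒰 f, germHom_injective_iff.mpr fun g hg => ?_⟩
  have eventually_ne_one : ∀ᶠ s in (𝒰 : Filter (Finset G)), f s g ≠ 1 :=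
    (hf g hg).filter_mono (Ultrafilter.of_le atTop)
  exact eventually_ne_one.frequently

theorem fully_residually_embeds_in_ultrapower
    (H : Type) [Group H] (G : Type) [Group G]
    (hfg : Group.FG G) (hres : FullyResidually H G) :
    ∃ (ι : Type) (𝒰 : Ultrafilter ι) (φ : G →* Filter.Germ (𝒰 : Filter ι) H),
      Function.Injective φ :=
  fully_residually_embeds_in_ultrapower_general H G hres
end

section
/- Let H be an equationally Noetherian group and let G be a finitely generated group that embeds into an ultrapower of H, i.e., there exist an index set ι, an ultrafilter 𝒰 on ι, and an injective group homomorphism G → H^𝒰. Then G is fully residually H. -/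
/-- A group `H` is equationally Noetherian: every system of equations (with
coefficients in `H`), viewed as a subset of the free product `H ∗ Fₙ`, is
equivalent to a finite subsystem.  A "solution" of the system is a homomorphism
`H ∗ Fₙ →* H` restricting to the identity on `H` and killing the system. -/
def EqNoetherian (H : Type*) [Group H] : Prop :=
  ∀ (n : ℕ) (S : Set (Monoid.Coprod H (FreeGroup (Fin n)))),
    ∃ S₀ : Finset (Monoid.Coprod H (FreeGroup (Fin n))),
      ↑S₀ ⊆ S ∧
      ∀ φ : Monoid.Coprod H (FreeGroup (Fin n)) →* H,
        φ.comp Monoid.Coprod.inl = MonoidHom.id H →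
        (∀ s ∈ S₀, φ s = 1) → ∀ s ∈ S, φ s = 1

/-!
Equational Noetherianity turns an infinite system of equations into a finite one, and finitely many
equations that each hold in almost every coordinate hold simultaneously in almost every coordinate.
Hence every homomorphism from a finitely generated group `G` to a reduced power of `H` lifts to the
direct power: lift it first to a free group `F` mapping onto `G`; almost every coordinate of that
lift kills the whole kernel of `F → G`, so it factors through `G`, and the exceptional coordinates
are replaced by the trivial homomorphism. For an embedding into an ultrapower, finitely many
nontrivial elements of `G` have nontrivial image in almost every coordinate of the lift.
-/

open Filter Function

theorem exists_comp_eq_of_freeGroup {α A B : Type*} [Group A] [Monoid B] {p : A →* B}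
    (hp : Surjective p) (f : FreeGroup α →* B) : ∃ g : FreeGroup α →* A, p.comp g = f := by
  choose a ha using fun x => hp (f (FreeGroup.of x))
  exact ⟨FreeGroup.lift a, by ext x; simp [ha]⟩

theorem exists_comp_eq_of_ker_le {A B C : Type*} [Group A] [Group B] [Group C] {p : A →* B}
    (hp : Surjective p) {f : A →* C} (hf : p.ker ≤ f.ker) : ∃ g : B →* C, g.comp p = f :=
  ⟨p.liftOfSurjective hp ⟨f, hf⟩, p.liftOfRightInverse_comp _ _ _⟩

theorem exists_surjective_freeGroup_fin (G : Type*) [Group G] [hG : Group.FG G] :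
    ∃ (n : ℕ) (π : FreeGroup (Fin n) →* G), Surjective π := by
  obtain ⟨α, _, π, hπ⟩ := Group.fg_iff_exists_freeGroup_hom_surjective_finite.1 hG
  obtain ⟨n, ⟨e⟩⟩ := Finite.exists_equiv_fin α
  let e' := FreeGroup.freeGroupCongr e.symm
  exact ⟨n, π.comp e'.toMonoidHom, hπ.comp e'.surjective⟩

/-- Equational Noetherianity for systems without coefficients: every system of equations
`S ⊆ Fₙ` has the same solutions in `H`, i.e. homomorphisms `Fₙ →* H` killing it, as some finite
subsystem. This is weaker than `EqNoetherian`: the systems `[x, a] = 1`, with `a` ranging over an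
infinite set of coefficients, are not of this form. -/
def CoeffFreeEqNoetherian (H : Type*) [Group H] : Prop :=
  ∀ (n : ℕ) (S : Set (FreeGroup (Fin n))), ∃ S₀ : Finset (FreeGroup (Fin n)),
    ↑S₀ ⊆ S ∧ ∀ ψ : FreeGroup (Fin n) →* H, (∀ w ∈ S₀, ψ w = 1) → ∀ w ∈ S, ψ w = 1

theorem EqNoetherian.coeffFreeEqNoetherian {H : Type*} [Group H] (hH : EqNoetherian H) :
    CoeffFreeEqNoetherian H := by
  classical
  intro n S
  obtain ⟨_, hinr, hsol⟩ := hH n (Monoid.Coprod.inr '' S)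
  obtain ⟨S₀, hS₀, rfl⟩ := Finset.subset_set_image_iff.1 hinr
  refine ⟨S₀, hS₀, fun ψ hψ => ?_⟩
  simpa using hsol (Monoid.Coprod.lift (MonoidHom.id H) ψ) (Monoid.Coprod.lift_comp_inl _ _)
    (by simpa using hψ)

namespace CoeffFreeEqNoetherian

variable {H ι : Type*} [Group H] {l : Filter ι}

theorem eventually_forall_mem (hH : CoeffFreeEqNoetherian H) {n : ℕ} {S : Set (FreeGroup (Fin n))}
    {ψ : ι → FreeGroup (Fin n) →* H} (hψ : ∀ w ∈ S, ∀ᶠ i in l, ψ i w = 1) :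
    ∀ᶠ i in l, ∀ w ∈ S, ψ i w = 1 := by
  obtain ⟨S₀, hS₀, hsol⟩ := hH n S
  have hψS₀ : ∀ᶠ i in l, ∀ w ∈ S₀, ψ i w = 1 :=
    (eventually_all_finset S₀).2 fun w hw => hψ w (hS₀ hw)
  exact hψS₀.mono fun i => hsol (ψ i)

theorem exists_coeMulHom_comp_eq (hH : CoeffFreeEqNoetherian H) {G : Type*} [Group G]
    [Group.FG G] (Φ : G →* Germ l H) : ∃ Θ : G →* (ι → H), (Germ.coeMulHom l).comp Θ = Φ := by
  obtain ⟨n, π, hπ⟩ := exists_surjective_freeGroup_fin G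
  obtain ⟨Ψ, hΨ⟩ : ∃ Ψ : FreeGroup (Fin n) →* (ι → H), (Germ.coeMulHom l).comp Ψ = Φ.comp π :=
    exists_comp_eq_of_freeGroup Quot.mk_surjective _
  have hΨ_apply (w) : (Ψ w : Germ l H) = Φ (π w) := DFunLike.congr_fun hΨ w
  let ψ (i : ι) : FreeGroup (Fin n) →* H := (Pi.evalMonoidHom _ i).comp Ψ
  have hker : ∀ᶠ i in l, π.ker ≤ (ψ i).ker := by
    refine hH.eventually_forall_mem fun w (hw : π w = 1) => ?_
    have hw_germ : (Ψ w : Germ l H) = (1 : ι → H) := by rw [hΨ_apply, hw, map_one, Germ.coe_one]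
    exact Germ.coe_eq.1 hw_germ
  have hfactor (i : ι) : ∃ θ : G →* H, π.ker ≤ (ψ i).ker → θ.comp π = ψ i := by
    by_cases hi : π.ker ≤ (ψ i).ker
    · exact (exists_comp_eq_of_ker_le hπ hi).imp fun _ h _ => h
    · exact ⟨1, fun h => absurd h hi⟩
  choose θ hθ using hfactor
  refine ⟨MonoidHom.pi θ, (MonoidHom.cancel_right hπ).1 (MonoidHom.ext fun w => ?_)⟩
  calc ((fun i => θ i (π w) : ι → H) : Germ l H)
    _ = Ψ w := Germ.coe_eq.2 (hker.mono fun i hi => DFunLike.congr_fun (hθ i hi) w)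
    _ = Φ (π w) := hΨ_apply w

end CoeffFreeEqNoetherian

theorem FullyResidually.of_eventually_ne_one {H G ι : Type*} [Group H] [Group G] {l : Filter ι}
    [l.NeBot] {θ : ι → G →* H} (hθ : ∀ g ≠ 1, ∀ᶠ i in l, θ i g ≠ 1) : FullyResidually H G := by
  intro s hs
  have hs_eventually : ∀ᶠ i in l, ∀ g ∈ s, θ i g ≠ 1 :=
    (eventually_all_finset s).2 fun g hg => hθ g (hs g hg)
  exact hs_eventually.exists.imp' θ fun _ h => h

theorem subgroup_of_ultrapower_fully_residually_general {H G ι : Type*} [Group H] [Group G]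
    [Group.FG G] (hH : CoeffFreeEqNoetherian H) {𝒰 : Ultrafilter ι}
    {Φ : G →* Germ (𝒰 : Filter ι) H} (hΦ : Injective Φ) : FullyResidually H G := by
  obtain ⟨Θ, hΘ⟩ := hH.exists_coeMulHom_comp_eq Φ
  have hΘ_ne_one (g : G) (hg : g ≠ 1) : ∀ᶠ i in (𝒰 : Filter ι), Θ g i ≠ 1 := by
    refine Ultrafilter.eventually_not.2 fun hΘg => hg ((map_eq_one_iff Φ hΦ).1 ?_)
    calc Φ g
      _ = (Θ g : Germ (𝒰 : Filter ι) H) := (DFunLike.congr_fun hΘ g).symm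
      _ = 1 := Germ.coe_eq.2 hΘg
  exact .of_eventually_ne_one (θ := fun i => (Pi.evalMonoidHom _ i).comp Θ) hΘ_ne_one

theorem subgroup_of_ultrapower_fully_residually
    (H : Type) [Group H] (hH : EqNoetherian H)
    (G : Type) [Group G] (hfg : Group.FG G)
    (hemb : ∃ (ι : Type) (𝒰 : Ultrafilter ι) (φ : G →* Filter.Germ (𝒰 : Filter ι) H),
      Function.Injective φ) :
    FullyResidually H G := by
  obtain ⟨ι, 𝒰, Φ, hΦ⟩ := hemb
  exact subgroup_of_ultrapower_fully_residually_general hH.coeffFreeEqNoetherian hΦ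
end

section
/- Let Γ be a simplicial graph with countably many vertices such that the equivalence relation on V(Γ) defined by v ~ u ⟺ v^⊥ = u^⊥ has exactly n equivalence classes, where n is finite. Then the partially commutative group 𝔾(Γ) embeds into a partially commutative group on 2n generators: there exist a finite simplicial graph Δ with 2n vertices and an injective group homomorphism 𝔾(Γ) → 𝔾(Δ). (Concretely, one may take Δ to have vertex set the pairs ([v], i) with [v] a ~-class and i ∈ {1,2}, where ([v], i) and ([u], j) are adjacent in Δ if and only if representatives of [v] and [u] are adjacent in Γ.) -/
/-- The set of commutation relators of a simplicial graph: one commutator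
`[u,v]` for each pair of adjacent vertices. -/
def raagRels {V : Type*} (Γ : SimpleGraph V) : Set (FreeGroup V) :=
  {r | ∃ u v : V, Γ.Adj u v ∧
    r = FreeGroup.of u * FreeGroup.of v * (FreeGroup.of u)⁻¹ * (FreeGroup.of v)⁻¹}

/-- The partially commutative group (right-angled Artin group) of a simplicial graph. -/
abbrev Raag {V : Type*} (Γ : SimpleGraph V) := PresentedGroup (raagRels Γ)

/-- The equivalence relation `v ~ u ↔ v^⊥ = u^⊥` on the vertices of a graph. -/
def neighborSetoid {V : Type*} (Γ : SimpleGraph V) : Setoid V :=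
  Setoid.ker fun v => Γ.neighborSet v

/-!
Replace every class `q` of vertices with equal neighbourhoods by countably many pairwise nonadjacent
copies `(q, i)`, `i : ℕ`. The group of `Γ` embeds in the group of this blow-up, so it suffices to
embed the latter in the group with two copies of each `q`, by
`(q, i) ↦ (q, 0)ⁱ (q, 1) (q, 0)⁻ⁱ`. In a free group this substitution is injective because the
conjugates `aⁱ b a⁻ⁱ` freely generate a free subgroup. In general one substitutes in one layer
`{q} × ℕ` at a time: the group of the blow-up embeds in a semidirect product `F ⋊ R`, with the layer
going into the free group `F` and all other generators into `R`, in such a way that the substitution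
in the layer extends to an injective endomorphism of `F` commuting with the action of `R`. An
element involves only finitely many layers, so finitely many steps suffice.
-/

section ConjPow

variable {G H : Type*} [Group G] [Group H]

/-- The conjugate `aⁱ b a⁻ⁱ`, the word substituted for the `i`-th copy of a vertex. -/
def conjPow (a b : G) (i : ℕ) : G := a ^ i * b * (a ^ i)⁻¹

@[simp] lemma map_conjPow {F : Type*} [FunLike F G H] [MonoidHomClass F G H] (f : F) (a b : G)
    (i : ℕ) :
    f (conjPow a b i) = conjPow (f a) (f b) i := by
  simp [conjPow]

lemma commute_conjPow {x a b : G} (ha : Commute x a) (hb : Commute x b) (i : ℕ) :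
    Commute x (conjPow a b i) :=
  ((ha.pow_right i).mul_right hb).mul_right (ha.pow_right i).inv_right

end ConjPow

section SemidirectProduct

open SemidirectProduct

variable {N G : Type*} [Group N] [Group G] {φ : G →* MulAut N}

lemma commute_inr_inl_of_apply_eq {g : G} {n : N} (h : φ g n = n) :
    Commute (inr g : N ⋊[φ] G) (inl n) := by
  have hconj := inl_aut (φ := φ) g n
  rw [h, map_inv, eq_mul_inv_iff_mul_eq] at hconj
  exact hconj.symm

lemma conjPow_inr_inl (g : G) (n : N) (i : ℕ) :
    conjPow (inr g : N ⋊[φ] G) (inl n) i = inl (φ (g ^ i) n) := by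
  rw [conjPow, inl_aut, map_pow, map_inv, map_pow]

lemma semidirectProduct_map_injective {N' G' : Type*} [Group N'] [Group G'] {φ' : G' →* MulAut N'}
    {f : N →* N'} {g : G →* G'} (h : ∀ x, f.comp (φ x).toMonoidHom = (φ' (g x)).toMonoidHom.comp f)
    (hf : Function.Injective f) (hg : Function.Injective g) :
    Function.Injective (SemidirectProduct.map f g h) := fun _ _ hxy =>
  SemidirectProduct.ext (hf (congrArg left hxy)) (hg (congrArg right hxy))

end SemidirectProduct

section FreeGroupAction

/-- The action by automorphisms on a free group induced by an action on its basis. -/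
def freeGroupAction (G X : Type*) [Group G] [MulAction G X] : G →* MulAut (FreeGroup X) where
  toFun g := FreeGroup.freeGroupCongr (MulAction.toPerm g)
  map_one' := MulEquiv.toMonoidHom_injective (by ext; simp)
  map_mul' g h := MulEquiv.toMonoidHom_injective (by ext; simp [mul_smul])

@[simp] lemma freeGroupAction_of {G X : Type*} [Group G] [MulAction G X] (g : G) (x : X) :
    freeGroupAction G X g (FreeGroup.of x) = FreeGroup.of (g • x) := by
  simp [freeGroupAction]

end FreeGroupAction

section FreeConjPow

open SemidirectProduct

/-- The endomorphism `(i, x) ↦ (0, x)ⁱ (1, x) (0, x)⁻ⁱ` of the free group on `ℕ × X`. The product is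
encoded as a sigma type, on which Mathlib's action moves the second component only. -/
def freeConjPow (X : Type*) : FreeGroup (Σ _ : ℕ, X) →* FreeGroup (Σ _ : ℕ, X) :=
  FreeGroup.lift fun p => conjPow (FreeGroup.of ⟨0, p.2⟩) (FreeGroup.of ⟨1, p.2⟩) p.1

@[simp] lemma freeConjPow_of {X : Type*} (i : ℕ) (x : X) :
    freeConjPow X (FreeGroup.of ⟨i, x⟩) =
      conjPow (FreeGroup.of ⟨0, x⟩) (FreeGroup.of ⟨1, x⟩) i :=
  FreeGroup.lift_apply_of

lemma freeGroup_of_pow_injective {X : Type*} (x : X) :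
    Function.Injective fun i : ℕ => FreeGroup.of x ^ i :=
  injective_pow_iff_not_isOfFinOrder.2 <|
    not_isOfFinOrder_of_isMulTorsionFree (FreeGroup.of_ne_one x)

/-- The map `(0, x) ↦ x`, `(i + 1, x) ↦ (x, 1)` to the semidirect product of the free group on
`X × FreeGroup X` by `FreeGroup X` acting through left multiplication. -/
def freeSplit (X : Type*) : FreeGroup (Σ _ : ℕ, X) →*
    FreeGroup (Σ _ : X, FreeGroup X) ⋊[freeGroupAction (FreeGroup X) _] FreeGroup X :=
  FreeGroup.lift fun
    | ⟨0, x⟩ => inr (FreeGroup.of x)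
    | ⟨_ + 1, x⟩ => inl (FreeGroup.of ⟨x, 1⟩)

lemma freeSplit_comp_freeConjPow (X : Type*) :
    (freeSplit X).comp (freeConjPow X) =
      inl.comp (FreeGroup.map fun p => ⟨p.2, FreeGroup.of p.2 ^ p.1⟩) := by
  ext1 ⟨i, x⟩
  simp [freeSplit, conjPow_inr_inl, -map_pow]

lemma freeConjPow_injective (X : Type*) : Function.Injective (freeConjPow X) := by
  have hbasis : Function.Injective fun p : Σ _ : ℕ, X =>
      (⟨p.2, FreeGroup.of p.2 ^ p.1⟩ : Σ _ : X, FreeGroup X) := by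
    rintro ⟨i, x⟩ ⟨j, y⟩ h
    simp only [Sigma.mk.injEq] at h
    obtain ⟨rfl, hpow⟩ := h
    rw [freeGroup_of_pow_injective x (eq_of_heq hpow)]
  have hcomp : Function.Injective (freeSplit X ∘ freeConjPow X) := by
    rw [← MonoidHom.coe_comp, freeSplit_comp_freeConjPow]
    exact inl_injective.comp (FreeGroup.map_injective hbasis)
  exact hcomp.of_comp

end FreeConjPow

section ConjTuples

variable (ι R : Type*) [Group R]

/-- The action of `R` on the free group on pairs of an index and a tuple `f : ι → R`, by conjugation
of all entries of `f`. Recording the whole tuple, not just its entry at the index, gives the basis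
elements of one layer the same second component, as `freeConjPow` requires. -/
def conjTupleAction : R →* MulAut (FreeGroup (Σ _ : ι, ι → R)) :=
  (freeGroupAction (ConjAct R) _).comp ConjAct.toConjAct.toMonoidHom

variable {ι R}

@[simp] lemma conjTupleAction_of (g : R) (i : ι) (f : ι → R) :
    conjTupleAction ι R g (FreeGroup.of ⟨i, f⟩) = FreeGroup.of ⟨i, fun j => g * f j * g⁻¹⟩ :=
  freeGroupAction_of (ConjAct.toConjAct g) (⟨i, f⟩ : Σ _ : ι, ι → R)

variable (ι R)

/-- The homomorphism sending the basis element `(i, f)` to `f i` and fixing `R`. -/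
def conjTupleEval : FreeGroup (Σ _ : ι, ι → R) ⋊[conjTupleAction ι R] R →* R :=
  SemidirectProduct.lift (FreeGroup.lift fun p => p.2 p.1) (MonoidHom.id R) fun g => by
    ext1 ⟨i, f⟩
    simp

/-- The substitution `freeConjPow` on the free group, extended by the identity of `R`. -/
def conjTupleConjPow : FreeGroup (Σ _ : ℕ, ℕ → R) ⋊[conjTupleAction ℕ R] R →*
    FreeGroup (Σ _ : ℕ, ℕ → R) ⋊[conjTupleAction ℕ R] R :=
  SemidirectProduct.map (freeConjPow _) (MonoidHom.id R) fun g => by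
    ext1 ⟨i, f⟩
    simp

lemma conjTupleConjPow_injective : Function.Injective (conjTupleConjPow R) :=
  semidirectProduct_map_injective _ (freeConjPow_injective _) Function.injective_id

end ConjTuples

namespace Raag

variable {V W H : Type*} [Group H] {Γ : SimpleGraph V} {Δ : SimpleGraph W}

/-- The generator of `Raag Γ` attached to a vertex. -/
def of (Γ : SimpleGraph V) (v : V) : Raag Γ := PresentedGroup.of v

lemma commute_of_adj {u v : V} (h : Γ.Adj u v) : Commute (of Γ u) (of Γ v) := by
  have hrel : of Γ u * of Γ v * (of Γ u)⁻¹ * (of Γ v)⁻¹ = 1 :=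
    PresentedGroup.one_of_mem ⟨u, v, h, rfl⟩
  rwa [mul_inv_eq_one, mul_inv_eq_iff_eq_mul] at hrel

/-- The universal property of `Raag Γ`. -/
def lift (f : V → H) (hf : ∀ u v, Γ.Adj u v → Commute (f u) (f v)) : Raag Γ →* H :=
  PresentedGroup.toGroup (f := f) <| by
    rintro _ ⟨u, v, h, rfl⟩
    simpa [mul_inv_eq_one, mul_inv_eq_iff_eq_mul] using (hf u v h).eq

@[simp] lemma lift_of (f : V → H) (hf : ∀ u v, Γ.Adj u v → Commute (f u) (f v)) (v : V) :
    lift f hf (of Γ v) = f v :=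
  PresentedGroup.toGroup.of _

lemma hom_ext {f g : Raag Γ →* H} (h : ∀ v, f (of Γ v) = g (of Γ v)) : f = g :=
  PresentedGroup.ext h

/-- The homomorphism of partially commutative groups induced by a graph homomorphism. -/
def map (f : Γ →g Δ) : Raag Γ →* Raag Δ :=
  lift (fun v => of Δ (f v)) fun _ _ h => commute_of_adj (f.map_adj h)

@[simp] lemma map_of (f : Γ →g Δ) (v : V) : map f (of Γ v) = of Δ (f v) :=
  lift_of _ _ v

/-- The homomorphism from `Raag Δ` onto the group of an induced subgraph that kills all other
vertices. -/
noncomputable def retract (f : Γ ↪g Δ) : Raag Δ →* Raag Γ :=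
  lift (Function.extend f (of Γ) 1) fun w w' h => by
    by_cases hw : ∃ v, f v = w
    · by_cases hw' : ∃ v, f v = w'
      · obtain ⟨v, rfl⟩ := hw
        obtain ⟨v', rfl⟩ := hw'
        simpa [f.injective.extend_apply] using commute_of_adj (f.map_adj_iff.1 h)
      · simp [Function.extend_apply' _ _ _ hw']
    · simp [Function.extend_apply' _ _ _ hw]

lemma map_injective (f : Γ ↪g Δ) : Function.Injective (map f.toHom) := by
  have hretract : (retract f).comp (map f.toHom) = MonoidHom.id _ :=
    hom_ext fun v => by simp [retract, f.injective.extend_apply]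
  exact Function.LeftInverse.injective (DFunLike.congr_fun hretract)

end Raag

section Blowup

open Raag SemidirectProduct

variable {Q : Type*} (G : SimpleGraph Q) (ι : Type*)

/-- The graph obtained from `G` by replacing each vertex with pairwise non-adjacent copies of it,
indexed by `ι`. -/
def blowup : SimpleGraph (Q × ι) := G.comap Prod.fst

variable {G ι}

lemma blowup_adj {p q : Q × ι} : (blowup G ι).Adj p q ↔ G.Adj p.1 q.1 := Iff.rfl

lemma commute_of_blowup {p q : Q} (h : G.Adj p q) (i j : ι) :
    Commute (of (blowup G ι) (p, i)) (of (blowup G ι) (q, j)) :=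
  commute_of_adj (blowup_adj.2 h)

variable [DecidableEq Q]

variable (G ι) in
/-- The map of the group of a blow-up to a semidirect product that sends the copies of `q` to the
basis elements attached to the tuple `i ↦ (q, i)` and all other generators to themselves. -/
def splitLayer (q : Q) : Raag (blowup G ι) →*
    FreeGroup (Σ _ : ι, ι → Raag (blowup G ι)) ⋊[conjTupleAction ι _] Raag (blowup G ι) :=
  lift (fun p => if p.1 = q then inl (FreeGroup.of ⟨p.2, fun j => of _ (q, j)⟩)
      else inr (of _ p)) <| by
    have hlayer (p : Q) (hp : G.Adj p q) (i j : ι) :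
        Commute (inr (of (blowup G ι) (p, i)) : _ ⋊[conjTupleAction ι _] _)
          (inl (FreeGroup.of ⟨j, fun k => of _ (q, k)⟩)) :=
      commute_inr_inl_of_apply_eq <| by
        simp [(commute_of_blowup hp i _).eq]
    rintro ⟨p, i⟩ ⟨r, j⟩ h
    rw [blowup_adj] at h
    by_cases hp : p = q <;> by_cases hr : r = q
    · exact absurd (hp.trans hr.symm) h.ne
    · simpa [hp, hr] using (hlayer r (hp ▸ h.symm) j i).symm
    · simpa [hp, hr] using hlayer p (hr ▸ h) i j
    · simpa [hp, hr] using (commute_of_blowup h i j).map inr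

lemma splitLayer_of_self (q : Q) (i : ι) :
    splitLayer G ι q (of _ (q, i)) = inl (FreeGroup.of ⟨i, fun j => of _ (q, j)⟩) := by
  simp [splitLayer]

lemma splitLayer_of_ne {p q : Q} (h : p ≠ q) (i : ι) :
    splitLayer G ι q (of _ (p, i)) = inr (of _ (p, i)) := by
  simp [splitLayer, h]

lemma splitLayer_injective (q : Q) : Function.Injective (splitLayer G ι q) := by
  have heval : (conjTupleEval ι _).comp (splitLayer G ι q) = MonoidHom.id _ := by
    refine hom_ext fun ⟨p, i⟩ => ?_
    obtain rfl | h := eq_or_ne p q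
    · simp [splitLayer_of_self, conjTupleEval]
    · simp [splitLayer_of_ne h, conjTupleEval]
  exact Function.LeftInverse.injective (g := conjTupleEval ι _) (DFunLike.congr_fun heval)

lemma commute_ite_conjPow {x : Raag (blowup G ℕ)} {p : Q × ℕ} (s : Finset Q)
    (h : ∀ i, Commute x (of _ (p.1, i))) :
    Commute x (if p.1 ∈ s then conjPow (of _ (p.1, 0)) (of _ (p.1, 1)) p.2 else of _ p) := by
  split_ifs
  · exact commute_conjPow (h 0) (h 1) p.2
  · exact h p.2

variable (G) in
/-- The endomorphism of the group of a blow-up that substitutes `(q, 0)ⁱ (q, 1) (q, 0)⁻ⁱ` for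
`(q, i)` whenever `q ∈ s`. -/
def layerConjPow (s : Finset Q) : Raag (blowup G ℕ) →* Raag (blowup G ℕ) :=
  lift (fun p => if p.1 ∈ s then conjPow (of _ (p.1, 0)) (of _ (p.1, 1)) p.2 else of _ p)
    fun _ _ h => commute_ite_conjPow s fun _ =>
      (commute_ite_conjPow s fun _ => commute_of_blowup (blowup_adj.1 h).symm _ _).symm

lemma layerConjPow_of_mem {s : Finset Q} {q : Q} (h : q ∈ s) (i : ℕ) :
    layerConjPow G s (of _ (q, i)) = conjPow (of _ (q, 0)) (of _ (q, 1)) i := by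
  simp [layerConjPow, h]

lemma layerConjPow_of_notMem {s : Finset Q} {q : Q} (h : q ∉ s) (i : ℕ) :
    layerConjPow G s (of _ (q, i)) = of _ (q, i) := by
  simp [layerConjPow, h]

lemma layerConjPow_empty : layerConjPow G ∅ = MonoidHom.id _ :=
  hom_ext fun ⟨q, i⟩ => layerConjPow_of_notMem (Finset.notMem_empty q) i

lemma layerConjPow_insert {q : Q} {s : Finset Q} (hq : q ∉ s) :
    layerConjPow G (insert q s) = (layerConjPow G {q}).comp (layerConjPow G s) := by
  refine hom_ext fun ⟨p, i⟩ => ?_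
  obtain rfl | hpq := eq_or_ne p q
  · simp [layerConjPow_of_mem, layerConjPow_of_notMem hq]
  · by_cases hs : p ∈ s <;> simp [layerConjPow, hpq, hs]

lemma splitLayer_comp_layerConjPow (q : Q) :
    (splitLayer G ℕ q).comp (layerConjPow G {q}) =
      (conjTupleConjPow _).comp (splitLayer G ℕ q) := by
  refine hom_ext fun ⟨p, i⟩ => ?_
  obtain rfl | h := eq_or_ne p q
  · simp [layerConjPow_of_mem, splitLayer_of_self, conjTupleConjPow]
  · simp [layerConjPow_of_notMem, splitLayer_of_ne, conjTupleConjPow, h]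

lemma layerConjPow_singleton_injective (q : Q) : Function.Injective (layerConjPow G {q}) := by
  have hcomp : Function.Injective (splitLayer G ℕ q ∘ layerConjPow G {q}) := by
    rw [← MonoidHom.coe_comp, splitLayer_comp_layerConjPow]
    exact (conjTupleConjPow_injective _).comp (splitLayer_injective q)
  exact hcomp.of_comp

lemma layerConjPow_injective (s : Finset Q) : Function.Injective (layerConjPow G s) := by
  induction s using Finset.induction_on with
  | empty =>
    rw [layerConjPow_empty]
    exact Function.injective_id
  | insert q s hq ih =>
    rw [layerConjPow_insert hq]
    exact (layerConjPow_singleton_injective q).comp ih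

end Blowup

section Doubling

open Raag Filter

variable {Q : Type*} (G : SimpleGraph Q)

/-- The graph homomorphism between blow-ups of `G` induced by a map of the indices. -/
def blowupMap {ι κ : Type*} (f : ι → κ) : blowup G ι →g blowup G κ where
  toFun := Prod.map id f
  map_rel' h := h

@[simp] lemma blowupMap_apply {ι κ : Type*} (f : ι → κ) (q : Q) (i : ι) :
    blowupMap G f (q, i) = (q, f i) := rfl

/-- The homomorphism from the group of the `ℕ`-fold blow-up to the group of the twofold one given by
`(q, i) ↦ (q, 0)ⁱ (q, 1) (q, 0)⁻ⁱ`. -/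
def doubling : Raag (blowup G ℕ) →* Raag (blowup G (Fin 2)) :=
  lift (fun p => conjPow (of _ (p.1, 0)) (of _ (p.1, 1)) p.2) fun p q h => by
    have hcomm (i : Fin 2) :
        Commute (of (blowup G (Fin 2)) (p.1, i)) (conjPow (of _ (q.1, 0)) (of _ (q.1, 1)) q.2) :=
      commute_conjPow (commute_of_blowup (blowup_adj.1 h) i 0)
        (commute_of_blowup (blowup_adj.1 h) i 1) q.2
    exact (commute_conjPow (hcomm 0).symm (hcomm 1).symm p.2).symm

variable {G}

lemma eventually_map_doubling_eq_layerConjPow [DecidableEq Q] (x : Raag (blowup G ℕ)) :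
    ∀ᶠ s : Finset Q in atTop, map (blowupMap G Fin.val) (doubling G x) = layerConjPow G s x := by
  have hx : x ∈ Subgroup.closure (Set.range (of (blowup G ℕ))) :=
    PresentedGroup.closure_range_of (raagRels (blowup G ℕ)) ▸ Subgroup.mem_top x
  induction hx using Subgroup.closure_induction with
  | mem _ h =>
    obtain ⟨⟨q, i⟩, rfl⟩ := h
    filter_upwards [eventually_ge_atTop {q}] with s hs
    rw [layerConjPow_of_mem (Finset.singleton_subset_iff.1 hs)]
    simp [doubling]
  | one => simp
  | mul x y _ _ hx hy =>
    filter_upwards [hx, hy] with s hxs hys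
    simp [hxs, hys]
  | inv x _ hx =>
    filter_upwards [hx] with s hxs
    simp [hxs]

lemma doubling_injective : Function.Injective (doubling G) := by
  classical
  intro x y hxy
  obtain ⟨s, hx, hy⟩ := ((eventually_map_doubling_eq_layerConjPow x).and
    (eventually_map_doubling_eq_layerConjPow y)).exists
  exact layerConjPow_injective s (by rw [← hx, ← hy, hxy])

end Doubling

section Deflation

variable {V : Type*} (Γ : SimpleGraph V)

/-- The graph on the classes of vertices with equal neighbourhoods, adjacency being that of
representatives. -/
noncomputable def deflation : SimpleGraph (Quotient (neighborSetoid Γ)) :=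
  Γ.comap Quotient.out

variable {Γ}

lemma neighborSetoid_mk_eq_iff {u v : V} :
    Quotient.mk (neighborSetoid Γ) u = Quotient.mk (neighborSetoid Γ) v ↔
      Γ.neighborSet u = Γ.neighborSet v :=
  Quotient.eq

lemma neighborSet_out_mk (v : V) :
    Γ.neighborSet (Quotient.mk (neighborSetoid Γ) v).out = Γ.neighborSet v :=
  neighborSetoid_mk_eq_iff.1 (Quotient.out_eq _)

lemma deflation_adj_mk {u v : V} :
    (deflation Γ).Adj (Quotient.mk _ u) (Quotient.mk _ v) ↔ Γ.Adj u v := by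
  rw [deflation, SimpleGraph.comap_adj, ← SimpleGraph.mem_neighborSet, neighborSet_out_mk,
    SimpleGraph.mem_neighborSet, SimpleGraph.adj_comm, ← SimpleGraph.mem_neighborSet,
    neighborSet_out_mk, SimpleGraph.mem_neighborSet, SimpleGraph.adj_comm]

lemma nonempty_embedding_blowup_deflation
    (hΓ : ∀ v, {u | Γ.neighborSet u = Γ.neighborSet v}.Countable) :
    Nonempty (Γ ↪g blowup (deflation Γ) ℕ) := by
  choose index hindex using fun v => Set.countable_iff_exists_injOn.1 (hΓ v)
  let copy (v : V) :=
    (Quotient.mk (neighborSetoid Γ) v, index (Quotient.mk (neighborSetoid Γ) v).out v)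
  refine ⟨⟨copy, fun u v h => ?_⟩, deflation_adj_mk⟩
  obtain ⟨hclass, hidx⟩ := Prod.mk.inj h
  rw [hclass] at hidx
  refine hindex _ ?_ (neighborSet_out_mk v).symm hidx
  exact (neighborSetoid_mk_eq_iff.1 hclass).trans (neighborSet_out_mk v).symm

end Deflation

theorem pc_group_with_n_deflation_classes_embeds_in_2n_generated_general
    {V : Type*} (Γ : SimpleGraph V)
    (hΓ : ∀ v, {u | Γ.neighborSet u = Γ.neighborSet v}.Countable) :
    ∃ φ : Raag Γ →* Raag (blowup (deflation Γ) (Fin 2)), Function.Injective φ := by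
  obtain ⟨f⟩ := nonempty_embedding_blowup_deflation hΓ
  exact ⟨(doubling _).comp (Raag.map f.toHom), doubling_injective.comp (Raag.map_injective f)⟩

theorem pc_group_with_n_deflation_classes_embeds_in_2n_generated
    {V : Type} [Countable V] (Γ : SimpleGraph V) (n : ℕ)
    (hclasses : Nonempty (Quotient (neighborSetoid Γ) ≃ Fin n)) :
    ∃ (Δ : SimpleGraph (Fin (2 * n))) (φ : Raag Γ →* Raag Δ),
      Function.Injective φ := by
  obtain ⟨φ, hφ⟩ := pc_group_with_n_deflation_classes_embeds_in_2n_generated_general Γ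
    fun _ => Set.to_countable _
  let e : Quotient (neighborSetoid Γ) × Fin 2 ≃ Fin (2 * n) :=
    ((Equiv.prodComm _ _).trans (.prodCongr (.refl _) hclasses.some)).trans finProdFinEquiv
  exact ⟨_, (Raag.map (SimpleGraph.Iso.map e _).toEmbedding.toHom).comp φ,
    (Raag.map_injective _).comp hφ⟩
end

section
/- Let 𝔾 = F(a,b) × F(c,d) be the direct product of two free groups of rank 2 (equivalently, the partially commutative group on generators a, b, c, d with relations [x,y] = 1 for x ∈ {a,b} and y ∈ {c,d}), and let H be the group with presentation ⟨a, b, c, d, t ∣ [a,c] = [a,d] = [b,c] = [b,d] = 1, [t, ab] = 1, [t, cd] = 1⟩ (the extension of the centraliser C_𝔾(ab·cd) = ⟨ab⟩ × ⟨cd⟩ of the element w = ab·cd). Let ι : 𝔾 → H be the natural homomorphism sending generators to generators. Then: (1) ι is injective; (2) the element v = [ι(a)^t, ι(c)] (the commutator of t⁻¹ι(a)t and ι(c)) is nontrivial in H; (3) every homomorphism φ : H → 𝔾 with φ ∘ ι = id_𝔾 satisfies φ(v) = 1. Consequently, H is not residually 𝔾 via homomorphisms that restrict to the identity on 𝔾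 (H is not separated by 𝔾 as a 𝔾-group). -/
namespace CentraliserExtension

/-- Formal commutator `x⁻¹y⁻¹xy` in a free group. -/
def fcomm {α : Type*} (x y : FreeGroup α) : FreeGroup α := x⁻¹ * y⁻¹ * x * y

/-- Commutator `g⁻¹h⁻¹gh` in a group. -/
def gcomm {M : Type*} [Group M] (g h : M) : M := g⁻¹ * h⁻¹ * g * h

/-- Relators for `𝔾 = F(a,b) × F(c,d)` on generators `a = 0, b = 1, c = 2, d = 3`:
`[x,y] = 1` for `x ∈ {a,b}` and `y ∈ {c,d}`. -/
def relsG : Set (FreeGroup (Fin 4)) :=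
  { fcomm (FreeGroup.of 0) (FreeGroup.of 2), fcomm (FreeGroup.of 0) (FreeGroup.of 3),
    fcomm (FreeGroup.of 1) (FreeGroup.of 2), fcomm (FreeGroup.of 1) (FreeGroup.of 3) }

/-- Relators for the extension of the centraliser of `w = ab·cd`, on generators
`a = 0, b = 1, c = 2, d = 3, t = 4`. -/
def relsH : Set (FreeGroup (Fin 5)) :=
  { fcomm (FreeGroup.of 0) (FreeGroup.of 2), fcomm (FreeGroup.of 0) (FreeGroup.of 3),
    fcomm (FreeGroup.of 1) (FreeGroup.of 2), fcomm (FreeGroup.of 1) (FreeGroup.of 3),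
    fcomm (FreeGroup.of 4) (FreeGroup.of 0 * FreeGroup.of 1),
    fcomm (FreeGroup.of 4) (FreeGroup.of 2 * FreeGroup.of 3) }

/-- `𝔾 = F(a,b) × F(c,d)` as a partially commutative (presented) group. -/
abbrev Gpc := PresentedGroup relsG

/-- `H = ⟨𝔾, t ∣ [t, C_𝔾(ab·cd)] = 1⟩`, the extension of the centraliser
`⟨ab⟩ × ⟨cd⟩` of `ab·cd`. -/
abbrev Hext := PresentedGroup relsH

/-- The element `v = [a^t, c]` of `H`. -/
def vElt : Hext :=
  gcomm ((PresentedGroup.of 4)⁻¹ * PresentedGroup.of 0 * PresentedGroup.of 4)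
    (PresentedGroup.of 2)

/-!
Killing `t` retracts `H` onto `𝔾`, so `ι` is injective. A retraction `φ : H → 𝔾` sends `v` to
`[a^g, c]` with `g = φ(t)`, and `a^g` commutes with `c` because `⟨a, b⟩` is normal in `𝔾` and
centralises `⟨c, d⟩`. On the other hand, sending `a, b, c, d` to the transposition `(0 1)` of `S₃`
kills `ab` and `cd`, so `t` may be sent to `(1 2)`; then `a^t ↦ (0 2)` does not commute with
`c ↦ (0 1)`.
-/

section Generalities

variable {α M N : Type*} [Group M] [Group N]

open scoped commutatorElement in
theorem gcomm_eq_one_iff_commute {g h : M} : gcomm g h = 1 ↔ Commute g h := by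
  have gcomm_eq : gcomm g h = ⁅g⁻¹, h⁻¹⁆ := by simp only [gcomm, commutatorElement_def, inv_inv]
  rw [gcomm_eq, commutatorElement_eq_one_iff_commute, Commute.inv_inv_iff]

theorem map_gcomm (φ : M →* N) (g h : M) : φ (gcomm g h) = gcomm (φ g) (φ h) := by
  simp only [gcomm, map_mul, map_inv]

theorem map_fcomm_eq_one_iff_commute (φ : FreeGroup α →* M) {x y : FreeGroup α} :
    φ (fcomm x y) = 1 ↔ Commute (φ x) (φ y) := by
  rw [← gcomm_eq_one_iff_commute, ← map_gcomm, fcomm, gcomm]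

theorem lift_map_of_eq_one_of_mem {rels : Set (FreeGroup α)} (φ : PresentedGroup rels →* M) :
    ∀ r ∈ rels, FreeGroup.lift (fun i ↦ φ (PresentedGroup.of i)) r = 1 := by
  have lift_eq : FreeGroup.lift (fun i ↦ φ (PresentedGroup.of i)) =
      φ.comp (PresentedGroup.mk rels) :=
    FreeGroup.ext_hom _ _ fun _ ↦ FreeGroup.lift_apply_of
  intro r hr
  rw [lift_eq, MonoidHom.comp_apply, PresentedGroup.one_of_mem hr, map_one]

theorem normal_of_le_centralizer_of_sup_eq_top {A B : Subgroup M}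
    (hAB : A ≤ Subgroup.centralizer B) (hsup : A ⊔ B = ⊤) : A.Normal := by
  have hBA : B ≤ Subgroup.normalizer A :=
    (Subgroup.le_centralizer_iff.1 hAB).trans (Subgroup.centralizer_le_normalizer _)
  rw [← Subgroup.normalizer_eq_top_iff, ← top_le_iff, ← hsup]
  exact sup_le Subgroup.le_normalizer hBA

theorem commute_conj_of_closure_union_eq_top {S T : Set M}
    (hST : ∀ s ∈ S, ∀ t ∈ T, Commute s t) (htop : Subgroup.closure (S ∪ T) = ⊤)
    {s t : M} (hs : s ∈ S) (ht : t ∈ T) (g : M) : Commute (g⁻¹ * s * g) t := by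
  have hcent : Subgroup.closure S ≤ Subgroup.centralizer (Subgroup.closure T : Set M) := by
    rw [Subgroup.centralizer_closure, Subgroup.closure_le]
    exact fun x hx y hy ↦ (hST x hx y hy).eq.symm
  have hnormal : (Subgroup.closure S).Normal :=
    normal_of_le_centralizer_of_sup_eq_top hcent (by rw [← Subgroup.closure_union, htop])
  have hconj : g⁻¹ * s * g ∈ Subgroup.closure S :=
    hnormal.conj_mem' s (Subgroup.subset_closure hs) g
  exact (hcent hconj t (Subgroup.subset_closure ht)).symm

end Generalities

section Presentations

variable {M : Type*} [Group M]

theorem forall_relsG_lift_eq_one_iff {f : Fin 4 → M} :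
    (∀ r ∈ relsG, FreeGroup.lift f r = 1) ↔
      ∀ i ∈ ({0, 1} : Set (Fin 4)), ∀ j ∈ ({2, 3} : Set (Fin 4)), Commute (f i) (f j) := by
  simp only [relsG, Set.mem_insert_iff, Set.mem_singleton_iff, forall_eq_or_imp, forall_eq,
    map_fcomm_eq_one_iff_commute, FreeGroup.lift_apply_of, and_assoc]

theorem forall_relsH_lift_eq_one_iff {f : Fin 5 → M} :
    (∀ r ∈ relsH, FreeGroup.lift f r = 1) ↔
      (∀ r ∈ relsG, FreeGroup.lift (fun i ↦ f i.castSucc) r = 1) ∧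
        Commute (f 4) (f 0 * f 1) ∧ Commute (f 4) (f 2 * f 3) := by
  simp only [relsG, relsH, Set.mem_insert_iff, Set.mem_singleton_iff, forall_eq_or_imp, forall_eq,
    map_fcomm_eq_one_iff_commute, FreeGroup.lift_apply_of, map_mul, and_assoc]
  rfl

theorem commute_conj_of_of {i j : Fin 4} (hi : i ∈ ({0, 1} : Set (Fin 4)))
    (hj : j ∈ ({2, 3} : Set (Fin 4))) (g : Gpc) :
    Commute (g⁻¹ * PresentedGroup.of i * g) (PresentedGroup.of j) := by
  have hcomm := forall_relsG_lift_eq_one_iff.1 (lift_map_of_eq_one_of_mem (MonoidHom.id Gpc))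
  have huniv : ({0, 1} ∪ {2, 3} : Set (Fin 4)) = Set.univ := by
    ext k
    fin_cases k <;> simp
  refine commute_conj_of_closure_union_eq_top (S := PresentedGroup.of '' {0, 1})
    (T := PresentedGroup.of '' {2, 3}) ?_ ?_ (Set.mem_image_of_mem _ hi)
    (Set.mem_image_of_mem _ hj) g
  · rintro _ ⟨k, hk, rfl⟩ _ ⟨l, hl, rfl⟩
    exact hcomm k hk l hl
  · rw [← Set.image_union, huniv, Set.image_univ, PresentedGroup.closure_range_of]

/-- The natural homomorphism `ι : 𝔾 → H`. -/
def iota : Gpc →* Hext :=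
  PresentedGroup.toGroup
    (forall_relsH_lift_eq_one_iff.1 (lift_map_of_eq_one_of_mem (MonoidHom.id Hext))).1

theorem iota_of (i : Fin 4) : iota (PresentedGroup.of i) = PresentedGroup.of i.castSucc :=
  PresentedGroup.toGroup.of _

theorem map_vElt_eq_one_of_comp_iota_eq_id {φ : Hext →* Gpc}
    (hφ : φ.comp iota = MonoidHom.id Gpc) : φ vElt = 1 := by
  have hgen (i : Fin 4) : φ (PresentedGroup.of i.castSucc) = PresentedGroup.of i := by
    rw [← iota_of]
    exact DFunLike.congr_fun hφ (PresentedGroup.of i)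
  have ha : φ (PresentedGroup.of 0) = PresentedGroup.of 0 := hgen 0
  have hc : φ (PresentedGroup.of 2) = PresentedGroup.of 2 := hgen 2
  rw [vElt, map_gcomm, gcomm_eq_one_iff_commute, map_mul, map_mul, map_inv, ha, hc]
  exact commute_conj_of_of (Set.mem_insert 0 _) (Set.mem_insert 2 _) _

/-- The universal property of the extension of a centraliser: the homomorphism `H → M` that extends
`f : 𝔾 → M` along `ι` and sends the stable letter `t` to `s`, where `s` centralises `f(ab)` and
`f(cd)`. -/
def extend (f : Gpc →* M) (s : M)
    (hab : Commute s (f (PresentedGroup.of 0) * f (PresentedGroup.of 1)))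
    (hcd : Commute s (f (PresentedGroup.of 2) * f (PresentedGroup.of 3))) : Hext →* M :=
  PresentedGroup.toGroup (f := Fin.snoc (α := fun _ ↦ M) (fun i ↦ f (PresentedGroup.of i)) s) <|
    forall_relsH_lift_eq_one_iff.2
      ⟨by simpa only [Fin.snoc_castSucc] using lift_map_of_eq_one_of_mem f, hab, hcd⟩

variable {f : Gpc →* M} {s : M}
  {hab : Commute s (f (PresentedGroup.of 0) * f (PresentedGroup.of 1))}
  {hcd : Commute s (f (PresentedGroup.of 2) * f (PresentedGroup.of 3))}

theorem extend_comp_iota : (extend f s hab hcd).comp iota = f := by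
  ext i
  rw [MonoidHom.comp_apply, iota_of, extend, PresentedGroup.toGroup.of, Fin.snoc_castSucc]

theorem extend_vElt : extend f s hab hcd vElt =
    gcomm (s⁻¹ * f (PresentedGroup.of 0) * s) (f (PresentedGroup.of 2)) := by
  simp only [vElt, map_gcomm, map_mul, map_inv, extend, PresentedGroup.toGroup.of]
  rfl

theorem iota_injective : Function.Injective iota := by
  let retraction : Hext →* Gpc :=
    extend (MonoidHom.id Gpc) 1 (Commute.one_left _) (Commute.one_left _)
  have hretraction : retraction.comp iota = MonoidHom.id Gpc := extend_comp_iota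
  exact Function.LeftInverse.injective (DFunLike.congr_fun hretraction)

/-- The homomorphism `𝔾 → S₃` sending every generator to the same transposition. It kills `ab` and
`cd`, so it extends to `H` with any image of `t`; such an extension detects `v`. -/
def swapHom : Gpc →* Equiv.Perm (Fin 3) :=
  PresentedGroup.toGroup (f := fun _ ↦ Equiv.swap 0 1) <|
    forall_relsG_lift_eq_one_iff.2 fun _ _ _ _ ↦ Commute.refl _

theorem vElt_ne_one : vElt ≠ 1 := by
  have hsq (i j : Fin 4) : swapHom (PresentedGroup.of i) * swapHom (PresentedGroup.of j) = 1 := by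
    simp only [swapHom, PresentedGroup.toGroup.of, Equiv.swap_mul_self]
  let ψ : Hext →* Equiv.Perm (Fin 3) := extend swapHom (Equiv.swap 1 2)
    (hsq 0 1 ▸ Commute.one_right _) (hsq 2 3 ▸ Commute.one_right _)
  have hψ : ψ vElt ≠ 1 := by
    rw [extend_vElt, swapHom, PresentedGroup.toGroup.of, PresentedGroup.toGroup.of]
    decide
  exact fun h ↦ hψ (h ▸ map_one ψ)

end Presentations

theorem centraliser_extension_not_separated :
    ∃ ι : Gpc →* Hext,
      (∀ i : Fin 4, ι (PresentedGroup.of i) = PresentedGroup.of (Fin.castSucc i)) ∧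
      Function.Injective ι ∧
      vElt ≠ 1 ∧
      (∀ φ : Hext →* Gpc, φ.comp ι = MonoidHom.id Gpc → φ vElt = 1) ∧
      ¬ (∀ h : Hext, h ≠ 1 →
          ∃ φ : Hext →* Gpc, φ.comp ι = MonoidHom.id Gpc ∧ φ h ≠ 1) := by
  refine ⟨iota, iota_of, iota_injective, vElt_ne_one,
    fun _ ↦ map_vElt_eq_one_of_comp_iota_eq_id, fun hsep ↦ ?_⟩
  obtain ⟨φ, hφ, hφv⟩ := hsep vElt vElt_ne_one
  exact hφv (map_vElt_eq_one_of_comp_iota_eq_id hφ)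

end CentraliserExtension
end

section
/- Let F(A) = F(a₁, a₂, …) be the free group on a countably infinite alphabet, F(B) = F(a₁, …, a_r) the subgroup generated by the first r generators, and F(b,c) the free group of rank 2. Let L ∈ ℕ and let w₁, …, w_r ∈ F(b,c) be reduced words of length r such that w_i ≠ w_j^{±1} for i ≠ j, each w_i involves the letter c (the letter c or c⁻¹ occurs in w_i), and no w_i begins or ends with b⁻¹. Define the homomorphism ψ : F(A) → F(b,c) on generators by ψ(a_i) = w_i · b^{L+i} · c · b^{L+i} · w_i for 1 ≤ i ≤ r, and ψ(a_j) = b^{L+r+j} · c · b^{L+r+j} for j > r. Then ψ is injective, and its restriction to F(B) is a quasi-isometric embedding with multiplicative constant 4r + 2L + 1: for every v ∈ F(B), 2L · ‖v‖ ≤ ‖ψ(v)‖ ≤ (4r + 2L + 1) · ‖v‖. -/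
/-- The homomorphism `ψ : F(a₁, a₂, …) → F(b, c)` (with `b = of false`,
`c = of true`, and the generators `a₁, a₂, …` indexed by `ℕ`, generator
`aᵢ` corresponding to index `i - 1`), given on generators by
`ψ(aᵢ) = wᵢ · b^(L+i) · c · b^(L+i) · wᵢ` for `1 ≤ i ≤ r` and
`ψ(aⱼ) = b^(L+r+j) · c · b^(L+r+j)` for `j > r`. -/
def psiMap (r L : ℕ) (w : Fin r → FreeGroup Bool) : FreeGroup ℕ →* FreeGroup Bool :=
  FreeGroup.lift fun i =>
    if h : i < r then
      w ⟨i, h⟩ * (FreeGroup.of false) ^ (L + i + 1) * FreeGroup.of true *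
        (FreeGroup.of false) ^ (L + i + 1) * w ⟨i, h⟩
    else
      (FreeGroup.of false) ^ (L + r + i + 1) * FreeGroup.of true *
        (FreeGroup.of false) ^ (L + r + i + 1)

/-!
Write each `ψ(aᵢ)` as `(s aᵢ⁻¹)⁻¹ * c * s aᵢ` with half-words `s aᵢ^±1` such as `b^±(L+i) wᵢ^±1`.
In the image of a reduced word, consecutive letters `x`, `y` contribute `s x * (s y⁻¹)⁻¹` between
two occurrences of `c^±1`, and `x ≠ y⁻¹`. These occurrences of `c^±1` never cancel provided that
distinct letters have distinct half-words, no half-word begins with `c^±1`, and none ends with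
`c^±1` followed by another; this gives injectivity. For `i ≤ r` the `wᵢ^±1` are distinct and of
length `r`, so the half-words of two distinct letters share a suffix of length less than `r` and
at least `L + 2` letters of each survive.
-/

namespace FreeGroupWord

open FreeGroup List

section Words

variable {α : Type*}

theorem exists_maximal_common_suffix (l₁ l₂ : List α) :
    ∃ u v t, l₁ = u ++ t ∧ l₂ = v ++ t ∧ ∀ a ∈ u.getLast?, a ∉ v.getLast? := by
  induction l₁ using List.reverseRecOn generalizing l₂ with
  | nil => exact ⟨[], l₂, [], by simp⟩
  | append_singleton l₁ a ih =>
    rcases l₂.eq_nil_or_concat with rfl | ⟨l₂, b, rfl⟩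
    · exact ⟨l₁ ++ [a], [], [], by simp⟩
    by_cases hab : a = b
    · obtain ⟨u, v, t, rfl, rfl, huv⟩ := ih l₂
      exact ⟨u, v, t ++ [a], by simp, by simp [hab], huv⟩
    · exact ⟨l₁ ++ [a], l₂ ++ [b], [], by simp, by simp, by simpa using Ne.symm hab⟩

theorem head?_invRev (l : List (α × Bool)) :
    (invRev l).head? = l.getLast?.map fun x => (x.1, !x.2) := by
  simp [invRev]

theorem isReduced_replicate (n : ℕ) (x : α × Bool) : IsReduced (replicate n x) :=
  isChain_replicate_of_rel _ fun _ => rfl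

variable [DecidableEq α]

theorem toWord_mk_of_isReduced {l : List (α × Bool)} (hl : IsReduced l) :
    (FreeGroup.mk l).toWord = l := by
  rw [toWord_mk, hl.reduce_eq]

theorem toWord_mul_of_isReduced {g h : FreeGroup α} (hgh : IsReduced (g.toWord ++ h.toWord)) :
    (g * h).toWord = g.toWord ++ h.toWord := by
  rw [toWord_mul, hgh.reduce_eq]

theorem exists_toWord_mul_inv_eq (g h : FreeGroup α) :
    ∃ u v t, g.toWord = u ++ t ∧ h.toWord = v ++ t ∧ (g * h⁻¹).toWord = u ++ invRev v := by
  obtain ⟨u, v, t, hg, hh, huv⟩ := exists_maximal_common_suffix g.toWord h.toWord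
  have hu : IsReduced u := (hg ▸ isReduced_toWord : IsReduced (u ++ t)).left_of_append
  have hv : IsReduced v := (hh ▸ isReduced_toWord : IsReduced (v ++ t)).left_of_append
  have hv' : IsReduced (invRev v) := by
    rw [← toWord_mk_of_isReduced hv, ← toWord_inv]
    exact isReduced_toWord
  have hred : IsReduced (u ++ invRev v) := by
    refine IsChain.append hu hv' fun x hx y hy hxy => ?_
    obtain ⟨z, hz, rfl⟩ : ∃ z ∈ v.getLast?, (z.1, !z.2) = y := by
      simpa [head?_invRev, eq_comm] using hy
    have hxz : x ≠ z := fun h => huv x hx (h ▸ hz)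
    exact Bool.eq_not.2 fun h => hxz (Prod.ext hxy h)
  have hmul : g * h⁻¹ = FreeGroup.mk (u ++ invRev v) := by
    rw [← mk_toWord (x := g), ← mk_toWord (x := h), hg, hh, ← mul_mk, ← mul_mk, ← mul_mk, ← inv_mk]
    group
  exact ⟨u, v, t, hg, hh, by rw [hmul, toWord_mk_of_isReduced hred]⟩

theorem two_mul_le_norm_mul_inv {g h : FreeGroup α} {K : ℕ}
    (hK : ∀ t, t <:+ g.toWord → t <:+ h.toWord →
      K + t.length ≤ g.norm ∧ K + t.length ≤ h.norm) :
    2 * K ≤ (g * h⁻¹).norm := by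
  obtain ⟨u, v, t, hg, hh, hgh⟩ := exists_toWord_mul_inv_eq g h
  have := hK t (hg ▸ suffix_append u t) (hh ▸ suffix_append v t)
  simp only [FreeGroup.norm, hg, hh, hgh, length_append, invRev_length] at this ⊢
  lia

theorem mem_of_mem_toWord_of_mem_closure {T : Set α} {v : FreeGroup α}
    (hv : v ∈ Subgroup.closure (of '' T)) : ∀ x ∈ v.toWord, x.1 ∈ T := by
  induction hv using Subgroup.closure_induction with
  | mem g hg =>
    obtain ⟨i, hi, rfl⟩ := hg
    simpa using hi
  | one => simp
  | mul g h _ _ ihg ihh =>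
    intro x hx
    exact (mem_append.1 ((toWord_mul_sublist g h).subset hx)).elim (ihg x) (ihh x)
  | inv g _ ih =>
    intro x hx
    rw [toWord_inv, invRev, mem_reverse, mem_map] at hx
    obtain ⟨y, hy, rfl⟩ := hx
    exact ih y hy

/-- The reduced word of `g` begins with `c` or `c⁻¹`. That it ends with one of these is expressed
as `BeginsWith c g⁻¹`. -/
def BeginsWith (c : α) (g : FreeGroup α) : Prop :=
  ∃ e, (c, e) ∈ g.toWord.head?

theorem beginsWith_inv_iff {c : α} {g : FreeGroup α} :
    BeginsWith c g⁻¹ ↔ ∃ e, (c, e) ∈ g.toWord.getLast? := by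
  simp [BeginsWith, toWord_inv, head?_invRev, or_comm]

theorem toWord_mul_of_not_beginsWith_inv {c : α} {g h : FreeGroup α} (hg : ¬BeginsWith c g⁻¹)
    (hh : BeginsWith c h) : (g * h).toWord = g.toWord ++ h.toWord := by
  obtain ⟨e, he⟩ := hh
  refine toWord_mul_of_isReduced (IsChain.append isReduced_toWord isReduced_toWord ?_)
  rintro ⟨a, d⟩ hx y hy rfl
  obtain rfl := Option.mem_unique he hy
  exact absurd (beginsWith_inv_iff.2 ⟨d, hx⟩) hg

theorem toWord_mk_singleton_mul {c : α} (e : Bool) {g : FreeGroup α} (hg : ¬BeginsWith c g) :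
    (FreeGroup.mk [(c, e)] * g).toWord = (c, e) :: g.toWord := by
  have hword : (FreeGroup.mk [(c, e)]).toWord = [(c, e)] := toWord_mk_of_isReduced .singleton
  rw [toWord_mul_of_isReduced, hword, singleton_append]
  rw [hword]
  refine IsChain.append (isChain_singleton _) isReduced_toWord ?_
  rintro x hx ⟨a, d⟩ hy hxy
  obtain rfl : (c, e) = x := by simpa using hx
  obtain rfl : c = a := hxy
  exact absurd ⟨d, hy⟩ hg

theorem not_beginsWith_mul_inv {c : α} {g h : FreeGroup α} (hg : ¬BeginsWith c g)
    (hgh : ∀ e, ¬(c, e) :: g.toWord <:+ h.toWord) : ¬BeginsWith c (g * h⁻¹) := by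
  rintro ⟨e, he⟩
  obtain ⟨u, v, t, hgw, hhw, hw⟩ := exists_toWord_mul_inv_eq g h
  rw [hw] at he
  rcases u with _ | ⟨a, u⟩
  · obtain ⟨⟨_, d⟩, hd, hc⟩ : ∃ x ∈ v.getLast?, (x.1, !x.2) = (c, e) := by
      simpa only [nil_append, head?_invRev, Option.mem_map] using he
    obtain rfl := congrArg Prod.fst hc
    obtain ⟨v, rfl⟩ := getLast?_eq_some_iff.1 hd
    exact hgh d ⟨v, by simp [hhw, hgw]⟩
  · exact hg ⟨e, by simpa [hgw] using he⟩

end Words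

section Homomorphisms

variable {α β : Type*} {s : α × Bool → FreeGroup β} {c : β} {T : Set α} {C K : ℕ}

/-- The homomorphism sending the `i`-th generator to `c` between two half-words. The one on the left
is inverted so that a letter and its inverse play symmetric roles: the image of `x` has the form
`(s x')⁻¹ * c ^ (±1) * s x`, where `x'` denotes the inverse letter. -/
def separatedHom (c : β) (s : α × Bool → FreeGroup β) : FreeGroup α →* FreeGroup β :=
  lift fun i => (s (i, false))⁻¹ * of c * s (i, true)

theorem mul_separatedHom_mk_cons (c : β) (s : α × Bool → FreeGroup β) (x : α × Bool)
    (l : List (α × Bool)) :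
    s (x.1, !x.2) * separatedHom c s (FreeGroup.mk (x :: l)) =
      FreeGroup.mk [(c, x.2)] * (s x * separatedHom c s (FreeGroup.mk l)) := by
  obtain ⟨i, _ | _⟩ := x <;> simp [separatedHom, lift_mk, of, invRev, mul_assoc]

variable [DecidableEq β]

theorem norm_lift_le [DecidableEq α] {f : α → FreeGroup β} (hf : ∀ i ∈ T, (f i).norm ≤ C)
    {v : FreeGroup α} (hv : ∀ x ∈ v.toWord, x.1 ∈ T) :
    (lift f v).norm ≤ C * v.norm := by
  have norm_lift_mk_le (l : List (α × Bool)) (hl : ∀ x ∈ l, x.1 ∈ T) :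
      (lift f (FreeGroup.mk l)).norm ≤ C * l.length := by
    induction l with
    | nil => simp
    | cons x l ih =>
      have hx : (cond x.2 (f x.1) (f x.1)⁻¹).norm ≤ C := by
        have := hf x.1 (hl x mem_cons_self)
        cases x.2 <;> simpa
      have hl' := ih fun y hy => hl y (mem_cons_of_mem x hy)
      rw [lift_mk] at hl' ⊢
      rw [map_cons, prod_cons, length_cons, mul_add_one, add_comm]
      exact (FreeGroup.norm_mul_le _ _).trans (add_le_add hx hl')
  have hle := norm_lift_mk_le v.toWord hv
  rwa [mk_toWord] at hle

/-- The condition on half-words `s` under which no `c` introduced by `separatedHom c s` cancels. In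
terms of the rose with petals labelled `(s (i, false))⁻¹ * c * s (i, true)`: folding the half-petals
labelled by `s` affects none of the edges labelled `c` and does not identify two of their
endpoints. -/
structure Separates (c : β) (s : α × Bool → FreeGroup β) : Prop where
  injective : Function.Injective s
  not_beginsWith : ∀ x, ¬BeginsWith c (s x)
  not_suffix : ∀ x y e, ¬(c, e) :: (s x).toWord <:+ (s y).toWord

namespace Separates

theorem toWord_mul_inv_mul (hs : Separates c s) (x y : α × Bool) {g : FreeGroup β}
    (hg : BeginsWith c g) :
    (s x * (s y)⁻¹ * g).toWord = (s x * (s y)⁻¹).toWord ++ g.toWord := by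
  refine toWord_mul_of_not_beginsWith_inv ?_ hg
  rw [mul_inv_rev, inv_inv]
  exact not_beginsWith_mul_inv (hs.not_beginsWith y) (hs.not_suffix y x)

theorem not_beginsWith_mul_inv_mul (hs : Separates c s) {x y : α × Bool} (hxy : x ≠ y)
    {g : FreeGroup β} (hg : BeginsWith c g) : ¬BeginsWith c (s x * (s y)⁻¹ * g) := by
  have hne : (s x * (s y)⁻¹).toWord ≠ [] := by
    rw [Ne, toWord_eq_nil_iff, mul_inv_eq_one]
    exact hs.injective.ne hxy
  rw [BeginsWith, hs.toWord_mul_inv_mul x y hg, head?_append_of_ne_nil _ hne]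
  exact not_beginsWith_mul_inv (hs.not_beginsWith x) (hs.not_suffix x y)

theorem beginsWith_and_le_norm_mk_cons (hs : Separates c s)
    (hK : ∀ x y, x.1 ∈ T → y.1 ∈ T → x ≠ y →
      ∀ t, t <:+ (s x).toWord → t <:+ (s y).toWord → K + t.length ≤ (s x).norm)
    (x : α × Bool) (l : List (α × Bool)) (hl : IsReduced (x :: l)) (hT : ∀ y ∈ x :: l, y.1 ∈ T) :
    BeginsWith c (s (x.1, !x.2) * separatedHom c s (FreeGroup.mk (x :: l))) ∧
      (2 * K + 1) * (x :: l).length ≤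
        (s (x.1, !x.2) * separatedHom c s (FreeGroup.mk (x :: l))).norm + K := by
  have hxT := hT x mem_cons_self
  induction l generalizing x with
  | nil =>
    have hx : K ≤ (s x).norm := by
      simpa using hK x (x.1, !x.2) hxT hxT (by simp [Prod.ext_iff]) [] nil_suffix nil_suffix
    have hword := toWord_mk_singleton_mul x.2 (hs.not_beginsWith x)
    rw [mul_separatedHom_mk_cons, ← one_eq_mk, _root_.map_one, mul_one, BeginsWith, FreeGroup.norm,
      hword]
    refine ⟨⟨x.2, rfl⟩, ?_⟩
    rw [length_singleton, length_cons, ← FreeGroup.norm]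
    lia
  | cons y l ih =>
    have hyT := hT y (by simp)
    have hxy : x ≠ (y.1, !y.2) := by
      rintro rfl
      simpa using (isReduced_cons_cons.1 hl).1
    set g := s (y.1, !y.2) * separatedHom c s (FreeGroup.mk (y :: l)) with hg
    obtain ⟨hgc, hgn⟩ := ih y (isReduced_cons_cons.1 hl).2
      (fun z hz => hT z (mem_cons_of_mem x hz)) hyT
    have hsplit : s x * separatedHom c s (FreeGroup.mk (y :: l)) =
        s x * (s (y.1, !y.2))⁻¹ * g := by
      rw [hg]
      group
    have hword := toWord_mk_singleton_mul x.2 (hs.not_beginsWith_mul_inv_mul hxy hgc)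
    have hmid : 2 * K ≤ (s x * (s (y.1, !y.2))⁻¹).norm :=
      two_mul_le_norm_mul_inv fun t htx hty =>
        ⟨hK x (y.1, !y.2) hxT hyT hxy t htx hty, hK (y.1, !y.2) x hyT hxT hxy.symm t hty htx⟩
    rw [mul_separatedHom_mk_cons, hsplit, BeginsWith, FreeGroup.norm, hword]
    refine ⟨⟨x.2, rfl⟩, ?_⟩
    rw [hs.toWord_mul_inv_mul _ _ hgc, length_cons (as := _ ++ _), length_append, ← FreeGroup.norm,
      ← FreeGroup.norm, length_cons, mul_add_one]
    lia

theorem le_norm_separatedHom [DecidableEq α] (hs : Separates c s)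
    (hK : ∀ x y, x.1 ∈ T → y.1 ∈ T → x ≠ y →
      ∀ t, t <:+ (s x).toWord → t <:+ (s y).toWord → K + t.length ≤ (s x).norm)
    {v : FreeGroup α} (hv : ∀ x ∈ v.toWord, x.1 ∈ T) :
    (2 * K + 1) * v.norm ≤ (separatedHom c s v).norm := by
  rcases hword : v.toWord with _ | ⟨x, l⟩
  · simp [FreeGroup.norm, hword]
  have hred : IsReduced (x :: l) := hword ▸ isReduced_toWord
  have hxT := hv x (by simp [hword])
  obtain ⟨hbegin, hnorm⟩ :=
    hs.beginsWith_and_le_norm_mk_cons hK x l hred (by simpa only [hword] using hv)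
  have hx' : K ≤ (s (x.1, !x.2)).norm := by
    simpa using hK (x.1, !x.2) x hxT hxT (by simp [Prod.ext_iff]) [] nil_suffix nil_suffix
  have hsplit : separatedHom c s v = (s (x.1, !x.2))⁻¹ *
      (s (x.1, !x.2) * separatedHom c s (FreeGroup.mk (x :: l))) := by
    rw [inv_mul_cancel_left, ← hword, mk_toWord]
  have hcat := toWord_mul_of_not_beginsWith_inv (g := (s (x.1, !x.2))⁻¹)
    (by rw [inv_inv]; exact hs.not_beginsWith _) hbegin
  rw [hsplit, FreeGroup.norm, FreeGroup.norm, hcat, length_append, hword, ← FreeGroup.norm,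
    ← FreeGroup.norm, norm_inv_eq]
  lia

theorem separatedHom_injective (hs : Separates c s) :
    Function.Injective (separatedHom c s) := by
  classical
  rw [injective_iff_map_eq_one]
  intro v hv
  have hnorm : (2 * 0 + 1) * v.norm ≤ (separatedHom c s v).norm :=
    hs.le_norm_separatedHom (T := Set.univ)
      (fun x _ _ _ _ t ht _ => by rw [zero_add]; exact ht.length_le) fun _ _ => trivial
  simpa [hv] using hnorm

end Separates

end Homomorphisms

end FreeGroupWord

namespace psiMap

open FreeGroup List FreeGroupWord

variable {r L : ℕ} {w : Fin r → FreeGroup Bool}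

/-- The `2r` words `wᵢ^±1`, indexed by `i` and the sign (`true` for `+1`), so that the hypotheses on
the `wᵢ` become that these words are distinct and do not begin with `b^∓1`. -/
def signedWord (w : Fin r → FreeGroup Bool) (p : Fin r × Bool) : FreeGroup Bool :=
  cond p.2 (w p.1) (w p.1)⁻¹

theorem norm_signedWord (hlen : ∀ i, (w i).norm = r) (p : Fin r × Bool) :
    (signedWord w p).norm = r := by
  obtain ⟨i, _ | _⟩ := p <;> simp [signedWord, hlen]

theorem head?_signedWord_ne
    (hhead : ∀ i, (w i).toWord.head? ≠ some (false, false))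
    (hlast : ∀ i, (w i).toWord.getLast? ≠ some (false, false)) (p : Fin r × Bool) :
    (signedWord w p).toWord.head? ≠ some (false, !p.2) := by
  obtain ⟨i, _ | _⟩ := p
  · simpa [signedWord, toWord_inv, head?_invRev] using hlast i
  · exact hhead i

theorem signedWord_injective (hlen : ∀ i, (w i).norm = r)
    (hne : ∀ i j : Fin r, i ≠ j → w i ≠ w j ∧ w i ≠ (w j)⁻¹) :
    Function.Injective (signedWord w) := by
  have ne_inv (i j : Fin r) : w i ≠ (w j)⁻¹ := by
    rcases eq_or_ne i j with rfl | hij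
    · intro h
      have hsq : w i ^ 2 = 1 := by rw [pow_two, ← eq_inv_iff_mul_eq_one, ← h]
      have hone : w i = 1 := by simpa using hsq
      have := hlen i
      rw [hone, FreeGroup.norm_one] at this
      exact i.pos.ne this
    · exact (hne i j hij).2
  have w_injective : Function.Injective w := fun i j h => by_contra fun hij => (hne i j hij).1 h
  rintro ⟨i, _ | _⟩ ⟨j, _ | _⟩ h
  · exact congrArg (·, false) (w_injective (inv_injective h))
  · exact absurd h.symm (ne_inv j i)
  · exact absurd h (ne_inv i j)
  · exact congrArg (·, true) (w_injective h)

/-- The half-words exhibiting `ψ` as a `separatedHom`: in the paper's indexing, the one of `aᵢ^±1`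
is `b^±(L+i) wᵢ^±1` for `i ≤ r` and `b^±(L+r+i)` for `i > r`. -/
def halfWord (L : ℕ) (w : Fin r → FreeGroup Bool) (x : ℕ × Bool) : FreeGroup Bool :=
  if h : x.1 < r then
    FreeGroup.mk (replicate (L + x.1 + 1) (false, x.2)) * signedWord w (⟨x.1, h⟩, x.2)
  else FreeGroup.mk (replicate (L + r + x.1 + 1) (false, x.2))

theorem eq_separatedHom : psiMap r L w = separatedHom true (halfWord L w) := by
  have pow_eq (n : ℕ) : FreeGroup.mk (replicate n (false, true)) = of false ^ n := by
    rw [of, pow_mk, flatten_replicate_singleton]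
  have inv_eq (n : ℕ) : (FreeGroup.mk (replicate n (false, false)))⁻¹ = of false ^ n := by
    rw [inv_mk, ← pow_eq]
    simp [invRev]
  ext i
  by_cases hi : i < r <;>
    simp [psiMap, separatedHom, halfWord, signedWord, hi, pow_eq, inv_eq, mul_assoc]

theorem toWord_halfWord_of_lt
    (hW : ∀ p, (signedWord w p).toWord.head? ≠ some (false, !p.2)) {x : ℕ × Bool} (hx : x.1 < r) :
    (halfWord L w x).toWord =
      replicate (L + x.1 + 1) (false, x.2) ++ (signedWord w (⟨x.1, hx⟩, x.2)).toWord := by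
  have hpow := toWord_mk_of_isReduced (isReduced_replicate (L + x.1 + 1) (false, x.2))
  rw [halfWord, dif_pos hx, toWord_mul_of_isReduced, hpow]
  rw [hpow]
  refine IsChain.append (isReduced_replicate _ _) isReduced_toWord ?_
  rintro y hy ⟨a, e⟩ hz hyz
  obtain rfl := eq_of_mem_replicate (mem_of_mem_getLast? hy)
  obtain rfl : false = a := hyz
  by_contra he
  exact hW _ (hz.trans (by simpa using Bool.eq_not.2 (Ne.symm he)))

theorem toWord_halfWord_of_le {x : ℕ × Bool} (hx : r ≤ x.1) :
    (halfWord L w x).toWord = replicate (L + r + x.1 + 1) (false, x.2) := by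
  rw [halfWord, dif_neg hx.not_gt, toWord_mk_of_isReduced (isReduced_replicate _ _)]

theorem norm_halfWord_of_lt (hlen : ∀ p, (signedWord w p).norm = r)
    (hW : ∀ p, (signedWord w p).toWord.head? ≠ some (false, !p.2)) {x : ℕ × Bool} (hx : x.1 < r) :
    (halfWord L w x).norm = L + x.1 + 1 + r := by
  rw [FreeGroup.norm, toWord_halfWord_of_lt hW hx, length_append, length_replicate,
    ← FreeGroup.norm, hlen]

theorem norm_halfWord_of_le {x : ℕ × Bool} (hx : r ≤ x.1) :
    (halfWord L w x).norm = L + r + x.1 + 1 := by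
  rw [FreeGroup.norm, toWord_halfWord_of_le hx, length_replicate]

theorem length_lt_of_suffix_halfWord (hinj : Function.Injective (signedWord w))
    (hlen : ∀ p, (signedWord w p).norm = r)
    (hW : ∀ p, (signedWord w p).toWord.head? ≠ some (false, !p.2))
    {x y : ℕ × Bool} (hx : x.1 < r) (hy : y.1 < r) (hxy : x ≠ y) {t : List (Bool × Bool)}
    (htx : t <:+ (halfWord L w x).toWord) (hty : t <:+ (halfWord L w y).toWord) :
    t.length < r := by
  by_contra! hrt
  have signedWord_suffix {z : ℕ × Bool} (hz : z.1 < r) (htz : t <:+ (halfWord L w z).toWord) :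
      (signedWord w (⟨z.1, hz⟩, z.2)).toWord <:+ t := by
    refine suffix_of_suffix_length_le ?_ htz ((hlen _).trans_le hrt)
    rw [toWord_halfWord_of_lt hW hz]
    exact suffix_append _ _
  have hsuffix := suffix_of_suffix_length_le (signedWord_suffix hx htx) (signedWord_suffix hy hty)
    ((hlen _).trans (hlen _).symm).le
  have heq := hinj (toWord_injective (hsuffix.eq_of_length ((hlen _).trans (hlen _).symm)))
  simp only [Prod.mk.injEq, Fin.mk.injEq] at heq
  exact hxy (Prod.ext heq.1 heq.2)

theorem eq_of_halfWord_suffix (hinj : Function.Injective (signedWord w))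
    (hlen : ∀ p, (signedWord w p).norm = r)
    (hW : ∀ p, (signedWord w p).toWord.head? ≠ some (false, !p.2))
    {x y : ℕ × Bool} (hy : y.1 < r)
    (hsuffix : (halfWord L w x).toWord <:+ (halfWord L w y).toWord) : x = y := by
  have hle : (halfWord L w x).norm ≤ (halfWord L w y).norm := hsuffix.length_le
  rw [norm_halfWord_of_lt hlen hW hy] at hle
  have hx : x.1 < r := by
    by_contra! hx
    rw [norm_halfWord_of_le hx] at hle
    lia
  by_contra hxy
  have hlt : (halfWord L w x).norm < r :=
    length_lt_of_suffix_halfWord hinj hlen hW hx hy hxy suffix_rfl hsuffix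
  rw [norm_halfWord_of_lt hlen hW hx] at hlt
  lia

theorem halfWord_injective (hinj : Function.Injective (signedWord w))
    (hlen : ∀ p, (signedWord w p).norm = r)
    (hW : ∀ p, (signedWord w p).toWord.head? ≠ some (false, !p.2)) :
    Function.Injective (halfWord L w) := by
  intro x y hxy
  rcases lt_or_ge y.1 r with hy | hy
  · exact eq_of_halfWord_suffix hinj hlen hW hy (by rw [hxy])
  rcases lt_or_ge x.1 r with hx | hx
  · exact (eq_of_halfWord_suffix hinj hlen hW hx (by rw [hxy])).symm
  have hword := congrArg toWord hxy
  rw [toWord_halfWord_of_le hx, toWord_halfWord_of_le hy, replicate_inj] at hword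
  simp only [Nat.add_right_cancel_iff, Nat.add_left_cancel_iff, Prod.mk.injEq, true_and] at hword
  exact Prod.ext hword.1 (hword.2.resolve_left (by lia))

theorem not_beginsWith_halfWord
    (hW : ∀ p, (signedWord w p).toWord.head? ≠ some (false, !p.2)) (x : ℕ × Bool) :
    ¬BeginsWith true (halfWord L w x) := by
  rintro ⟨e, he⟩
  rcases lt_or_ge x.1 r with hx | hx
  · simp [toWord_halfWord_of_lt hW hx, replicate_succ] at he
  · simp [toWord_halfWord_of_le hx, replicate_succ] at he

theorem separates_halfWord (hinj : Function.Injective (signedWord w))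
    (hlen : ∀ p, (signedWord w p).norm = r)
    (hW : ∀ p, (signedWord w p).toWord.head? ≠ some (false, !p.2)) :
    Separates true (halfWord L w) where
  injective := halfWord_injective hinj hlen hW
  not_beginsWith := not_beginsWith_halfWord hW
  not_suffix x y e hsuffix := by
    rcases lt_or_ge y.1 r with hy | hy
    · obtain rfl := eq_of_halfWord_suffix hinj hlen hW hy ((suffix_cons _ _).trans hsuffix)
      simpa using hsuffix.length_le
    · have hmem := hsuffix.subset mem_cons_self
      rw [toWord_halfWord_of_le hy] at hmem
      simpa using eq_of_mem_replicate hmem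

theorem norm_psiMap_le (hlen : ∀ p, (signedWord w p).norm = r)
    (hW : ∀ p, (signedWord w p).toWord.head? ≠ some (false, !p.2)) {v : FreeGroup ℕ}
    (hv : ∀ x ∈ v.toWord, x.1 ∈ Set.Iio r) :
    (psiMap r L w v).norm ≤ (4 * r + 2 * L + 1) * v.norm := by
  rw [eq_separatedHom]
  refine norm_lift_le (fun i hi => ?_) hv
  have hnorm (e : Bool) : (halfWord L w (i, e)).norm = L + i + 1 + r :=
    norm_halfWord_of_lt hlen hW hi
  calc ((halfWord L w (i, false))⁻¹ * of true * halfWord L w (i, true)).norm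
      ≤ (halfWord L w (i, false)).norm + 1 + (halfWord L w (i, true)).norm := by
        grw [FreeGroup.norm_mul_le, FreeGroup.norm_mul_le, norm_inv_eq, norm_of]
    _ ≤ 4 * r + 2 * L + 1 := by
        have := Set.mem_Iio.1 hi
        rw [hnorm, hnorm]
        lia

end psiMap

open psiMap FreeGroupWord in
theorem psi_injective_and_quasiIsometric_general
    (r L : ℕ) (w : Fin r → FreeGroup Bool)
    (hlen : ∀ i, (w i).norm = r)
    (hne : ∀ i j : Fin r, i ≠ j → w i ≠ w j ∧ w i ≠ (w j)⁻¹)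
    (hhead : ∀ i, (w i).toWord.head? ≠ some (false, false))
    (hlast : ∀ i, (w i).toWord.getLast? ≠ some (false, false)) :
    Function.Injective (psiMap r L w) ∧
    ∀ v : FreeGroup ℕ,
      v ∈ Subgroup.closure (Set.range fun i : Fin r => FreeGroup.of (i : ℕ)) →
        (2 * L + 5) * v.norm ≤ ((psiMap r L w) v).norm ∧
        ((psiMap r L w) v).norm ≤ (4 * r + 2 * L + 1) * v.norm := by
  have hinj := signedWord_injective hlen hne
  have hnorm := norm_signedWord hlen
  have hW := head?_signedWord_ne hhead hlast
  have hsep : Separates true (halfWord L w) := separates_halfWord hinj hnorm hW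
  refine ⟨eq_separatedHom (L := L) ▸ hsep.separatedHom_injective, fun v hv => ?_⟩
  have hletters : ∀ x ∈ v.toWord, x.1 ∈ Set.Iio r := by
    apply mem_of_mem_toWord_of_mem_closure
    rwa [← Fin.range_val, ← Set.range_comp]
  refine ⟨?_, norm_psiMap_le hnorm hW hletters⟩
  rw [eq_separatedHom]
  refine hsep.le_norm_separatedHom (K := L + 2) (fun x y hx hy hxy t htx hty => ?_) hletters
  have hlt := length_lt_of_suffix_halfWord hinj hnorm hW hx hy hxy htx hty
  rw [norm_halfWord_of_lt hnorm hW hx]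
  lia

theorem psi_injective_and_quasiIsometric
    (r L : ℕ) (w : Fin r → FreeGroup Bool)
    (hlen : ∀ i, (w i).norm = r)
    (hne : ∀ i j : Fin r, i ≠ j → w i ≠ w j ∧ w i ≠ (w j)⁻¹)
    (hc : ∀ i, ∃ p ∈ (w i).toWord, p.1 = true)
    (hhead : ∀ i, (w i).toWord.head? ≠ some (false, false))
    (hlast : ∀ i, (w i).toWord.getLast? ≠ some (false, false)) :
    Function.Injective (psiMap r L w) ∧
    ∀ v : FreeGroup ℕ,
      v ∈ Subgroup.closure (Set.range fun i : Fin r => FreeGroup.of (i : ℕ)) →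
        2 * L * v.norm ≤ ((psiMap r L w) v).norm ∧
        ((psiMap r L w) v).norm ≤ (4 * r + 2 * L + 1) * v.norm := by
  obtain ⟨hinj, hqi⟩ := psi_injective_and_quasiIsometric_general r L w hlen hne hhead hlast
  exact ⟨hinj, fun v hv => ⟨(Nat.mul_le_mul_right _ (by lia)).trans (hqi v hv).1, (hqi v hv).2⟩⟩
end

section
/- Let k, r ≥ 1, let w₁, …, w_k be elements of the free group F_r of rank r such that every generator of F_r occurs in the reduced word of some w_i, and set D = max_i ‖w_i‖ (so that r ≤ kD). Then there exists an injective group homomorphism ψ : F_r → F₂ into the free group of rank 2 such that: (1) for every v ∈ F_r, 2kD · ‖v‖ ≤ ‖ψ(v)‖ ≤ (6kD + 1) · ‖v‖ (a quasi-isometric embedding whose constant does not exceed 6kD + 1); and (2) 2kD² ≤ max_i ‖ψ(w_i)‖ ≤ 7kD². -/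
/-!
Let `a`, `b` be the generators of `F₂`. The embedding sends the `g`-th generator of `F_r` to
`a ^ g * b ^ M * a ^ (-g)` with `M = 2kD`. The upper bound is the triangle inequality together with
`r ≤ kD`. For the lower bound, write `F₂ = F_ℤ ⋊ ℤ`, where `F_ℤ` is the normal closure of `b`,
freely generated by the conjugates `a ^ n * b * a ^ (-n)`, and `ℤ = ⟨a⟩` translates these
generators. A letter `a` or `b` changes the `F_ℤ`-component by at most one letter, so passing to
this component does not increase length; and the `F_ℤ`-component of the image of `v` is `v` with
each letter repeated `M` times, which is again a reduced word.
-/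

section SubadditiveLength

variable {α β : Type*} [DecidableEq α] [DecidableEq β]

theorem le_mul_norm_of_subadditive (ℓ : FreeGroup α → ℕ) (C : ℕ) (h_one : ℓ 1 = 0)
    (h_mul : ∀ x y, ℓ (x * y) ≤ ℓ x + ℓ y) (h_of : ∀ a, ℓ (.of a) ≤ C)
    (h_inv : ∀ a, ℓ (.of a)⁻¹ ≤ C) (v : FreeGroup α) : ℓ v ≤ C * v.norm := by
  have le_mul_length (L : List (α × Bool)) : ℓ (.mk L) ≤ C * L.length := by
    induction L with
    | nil => exact h_one.le
    | cons p L ih =>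
      have letter : ℓ (.mk [p]) ≤ C := by
        obtain ⟨a, _ | _⟩ := p
        exacts [h_inv a, h_of a]
      calc ℓ (.mk (p :: L)) ≤ ℓ (.mk [p]) + ℓ (.mk L) := h_mul (.mk [p]) (.mk L)
        _ ≤ C + C * L.length := add_le_add letter ih
        _ = C * (p :: L).length := by rw [List.length_cons]; ring
  simpa only [FreeGroup.mk_toWord, FreeGroup.norm] using le_mul_length v.toWord

theorem norm_apply_le_mul_norm (f : FreeGroup α →* FreeGroup β) {C : ℕ}
    (hf : ∀ a, (f (.of a)).norm ≤ C) (v : FreeGroup α) : (f v).norm ≤ C * v.norm :=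
  le_mul_norm_of_subadditive (fun x => (f x).norm) C (by simp)
    (fun x y => by simpa only [map_mul] using FreeGroup.norm_mul_le (f x) (f y)) hf
    (fun a => by simpa only [map_inv, FreeGroup.norm_inv_eq] using hf a) v

end SubadditiveLength

section PowerSubstitution

variable {α β : Type*}

theorem isReduced_flatMap_replicate {c : α → β} (hc : c.Injective) (M : ℕ)
    {L : List (α × Bool)} (hL : FreeGroup.IsReduced L) :
    FreeGroup.IsReduced (L.flatMap fun p => List.replicate M (c p.1, p.2)) := by
  obtain rfl | hM := eq_or_ne M 0
  · simp [List.flatMap_def]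
  rw [List.flatMap_def, FreeGroup.IsReduced, List.isChain_flatten (by simp [hM])]
  constructor
  · simp only [List.forall_mem_map]
    exact fun p _ => List.isChain_replicate_of_rel M fun _ => rfl
  · rw [List.isChain_map]
    refine List.IsChain.imp (fun p q hpq => ?_) hL
    simpa [hM, List.getLast?_replicate, List.head?_replicate, hc.eq_iff] using hpq

theorem lift_of_pow_mk (c : α → β) (M : ℕ) (L : List (α × Bool)) :
    FreeGroup.lift (fun a => FreeGroup.of (c a) ^ M) (.mk L) =
      .mk (L.flatMap fun p => List.replicate M (c p.1, p.2)) := by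
  have mk_replicate (p : β × Bool) : FreeGroup.mk (List.replicate M p) = .mk [p] ^ M := by
    simp [FreeGroup.pow_mk]
  induction L with
  | nil => exact map_one _
  | cons p L ih =>
    rw [List.flatMap_cons, ← FreeGroup.mul_mk, ← ih, mk_replicate, ← List.singleton_append,
      ← FreeGroup.mul_mk, map_mul]
    congr 1
    obtain ⟨a, _ | _⟩ := p
    · simp [FreeGroup.of, FreeGroup.inv_mk, FreeGroup.invRev]
    · simp [FreeGroup.of]

theorem norm_lift_of_pow [DecidableEq α] [DecidableEq β] {c : α → β} (hc : c.Injective)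
    (M : ℕ) (v : FreeGroup α) :
    (FreeGroup.lift (fun a => FreeGroup.of (c a) ^ M) v).norm = M * v.norm := by
  nth_rw 1 [← v.mk_toWord]
  rw [lift_of_pow_mk, FreeGroup.norm, FreeGroup.toWord_mk,
    (isReduced_flatMap_replicate hc M FreeGroup.isReduced_toWord).reduce_eq]
  simp [FreeGroup.norm, mul_comm]

end PowerSubstitution

/-- The action of `ℤ` on the free group `F_ℤ` translating the generators. -/
def translation : Multiplicative ℤ →* MulAut (FreeGroup ℤ) where
  toFun n := FreeGroup.freeGroupCongr (Equiv.addLeft n.toAdd)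
  map_one' := by ext; simp
  map_mul' m n := by ext; simp [FreeGroup.map.comp, Function.comp_def]

/-- The homomorphism (in fact an isomorphism) from `F₂` to `F_ℤ ⋊ ℤ` used to measure lengths from
below. The letters `false` and `true` stand for the generators `a` and `b`. -/
def toSemidirectProduct : FreeGroup Bool →* FreeGroup ℤ ⋊[translation] Multiplicative ℤ :=
  FreeGroup.lift fun x => if x then .inl (.of 0) else .inr (.ofAdd 1)

theorem norm_translation_le (n : Multiplicative ℤ) (x : FreeGroup ℤ) :
    (translation n x).norm ≤ x.norm := by
  simpa using norm_apply_le_mul_norm (translation n).toMonoidHom (C := 1)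
    (fun m => by simp [translation]) x

theorem norm_left_toSemidirectProduct_le (v : FreeGroup Bool) :
    (toSemidirectProduct v).left.norm ≤ v.norm := by
  rw [← one_mul v.norm]
  refine le_mul_norm_of_subadditive (fun x => (toSemidirectProduct x).left.norm) 1 (by simp)
    (fun x y => ?_) ?_ ?_ v
  · rw [map_mul, SemidirectProduct.mul_left]
    exact (FreeGroup.norm_mul_le _ _).trans (add_le_add_right (norm_translation_le _ _) _)
  all_goals rintro (_ | _) <;> simp [toSemidirectProduct]

theorem norm_of_zpow {α : Type*} [DecidableEq α] (a : α) (n : ℤ) :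
    (FreeGroup.of a ^ n).norm = n.natAbs := by
  cases n <;> simp [zpow_negSucc]

section ConjPowHom

variable {ι : Type*}

/-- The homomorphism to `F₂` given on generators by `i ↦ a ^ c i * b ^ M * a ^ (-c i)`, where `a`
and `b` are the letters `false` and `true`. -/
def conjPowHom (M : ℕ) (c : ι → ℤ) : FreeGroup ι →* FreeGroup Bool :=
  FreeGroup.lift fun i => .of false ^ c i * .of true ^ M * (.of false ^ c i)⁻¹

theorem toSemidirectProduct_conjPowHom (M : ℕ) (c : ι → ℤ) (v : FreeGroup ι) :
    toSemidirectProduct (conjPowHom M c v) =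
      .inl (FreeGroup.lift (fun i => .of (c i) ^ M) v) := by
  suffices toSemidirectProduct.comp (conjPowHom M c) =
      SemidirectProduct.inl.comp (FreeGroup.lift fun i => .of (c i) ^ M) from
    DFunLike.congr_fun this v
  ext1 i
  have map_of_false_zpow (n : ℤ) :
      toSemidirectProduct (.of false ^ n) = .inr (.ofAdd n) := by
    rw [map_zpow, toSemidirectProduct, FreeGroup.lift_apply_of, if_neg Bool.false_ne_true,
      ← map_zpow, ← ofAdd_zsmul, smul_eq_mul, mul_one]
  have map_of_true : toSemidirectProduct (.of true) = .inl (.of 0) := by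
    simp [toSemidirectProduct]
  have translation_of_zero : translation (.ofAdd (c i)) (.of 0) = .of (c i) := by
    simp [translation]
  calc toSemidirectProduct (conjPowHom M c (.of i))
      = .inr (.ofAdd (c i)) * .inl (.of 0 ^ M) * .inr (.ofAdd (c i))⁻¹ := by
        simp [conjPowHom, map_of_false_zpow, map_of_true]
    _ = .inl (translation (.ofAdd (c i)) (.of 0 ^ M)) := (SemidirectProduct.inl_aut _ _).symm
    _ = .inl (FreeGroup.lift (fun i => .of (c i) ^ M) (.of i)) := by
        rw [map_pow, translation_of_zero, FreeGroup.lift_apply_of]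

variable [DecidableEq ι]

theorem mul_norm_le_norm_conjPowHom (M : ℕ) {c : ι → ℤ} (hc : c.Injective) (v : FreeGroup ι) :
    M * v.norm ≤ (conjPowHom M c v).norm :=
  calc M * v.norm = (toSemidirectProduct (conjPowHom M c v)).left.norm := by
        rw [toSemidirectProduct_conjPowHom, SemidirectProduct.left_inl, norm_lift_of_pow hc]
    _ ≤ (conjPowHom M c v).norm := norm_left_toSemidirectProduct_le _

theorem norm_conjPowHom_le (M : ℕ) {c : ι → ℤ} {R : ℕ} (hc : ∀ i, (c i).natAbs ≤ R)
    (v : FreeGroup ι) : (conjPowHom M c v).norm ≤ (M + 2 * R) * v.norm := by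
  refine norm_apply_le_mul_norm _ (fun i => ?_) v
  let x : FreeGroup Bool := .of false ^ c i
  have norm_x : x.norm ≤ R := (norm_of_zpow false (c i)).trans_le (hc i)
  calc (conjPowHom M c (.of i)).norm = (x * .of true ^ M * x⁻¹).norm := by
        rw [conjPowHom, FreeGroup.lift_apply_of]
    _ ≤ x.norm + (FreeGroup.of true ^ M).norm + x⁻¹.norm :=
        (FreeGroup.norm_mul_le _ _).trans (add_le_add_left (FreeGroup.norm_mul_le _ _) _)
    _ ≤ M + 2 * R := by
        rw [FreeGroup.norm_of_pow, FreeGroup.norm_inv_eq]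
        lia

end ConjPowHom

theorem injective_of_mul_norm_le {α β : Type*} [DecidableEq α] [DecidableEq β]
    {f : FreeGroup α →* FreeGroup β} {M : ℕ} (hM : M ≠ 0)
    (hf : ∀ v, M * v.norm ≤ (f v).norm) : Function.Injective f := by
  refine (injective_iff_map_eq_one f).2 fun v hv => FreeGroup.norm_eq_zero.1 ?_
  have mul_norm_le_zero : M * v.norm ≤ 0 := by simpa [hv] using hf v
  simpa [hM] using mul_norm_le_zero

theorem card_le_card_mul_of_forall_mem_toWord {κ ι : Type*} [Fintype κ] [Fintype ι] [DecidableEq ι]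
    {w : κ → FreeGroup ι} (hocc : ∀ g, ∃ i, ∃ p ∈ (w i).toWord, p.1 = g) {D : ℕ}
    (hD : ∀ i, (w i).norm ≤ D) : Fintype.card ι ≤ Fintype.card κ * D := by
  let letters (i : κ) : Finset ι := ((w i).toWord.map Prod.fst).toFinset
  have letters_cover : Finset.univ ⊆ Finset.univ.biUnion letters := fun g _ => by
    simpa [letters] using hocc g
  have card_letters_le (i : κ) : (letters i).card ≤ D :=
    (List.toFinset_card_le _).trans (List.length_map Prod.fst |>.trans_le (hD i))
  exact (Finset.card_le_card letters_cover).trans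
    (Finset.card_biUnion_le_card_mul _ _ D fun i _ => card_letters_le i)

theorem free_group_qi_embedding_controlled_displacement
    (k r : ℕ) (hk : 1 ≤ k) (hr : 1 ≤ r)
    (w : Fin k → FreeGroup (Fin r))
    (hocc : ∀ g : Fin r, ∃ i : Fin k, ∃ p ∈ (w i).toWord, p.1 = g)
    (D : ℕ) (hD : D = Finset.univ.sup fun i : Fin k => (w i).norm) :
    ∃ ψ : FreeGroup (Fin r) →* FreeGroup Bool,
      Function.Injective ψ ∧
      (∀ v : FreeGroup (Fin r),
        2 * k * D * v.norm ≤ (ψ v).norm ∧ (ψ v).norm ≤ (6 * k * D + 1) * v.norm) ∧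
      2 * k * D ^ 2 ≤ (Finset.univ.sup fun i : Fin k => (ψ (w i)).norm) ∧
      (Finset.univ.sup fun i : Fin k => (ψ (w i)).norm) ≤ 7 * k * D ^ 2 := by
  have norm_w_le (i : Fin k) : (w i).norm ≤ D :=
    hD ▸ Finset.le_sup (f := fun i => (w i).norm) (Finset.mem_univ i)
  have rank_le : r ≤ k * D := by simpa using card_le_card_mul_of_forall_mem_toWord hocc norm_w_le
  have hM : 2 * k * D ≠ 0 := by lia
  let c (g : Fin r) : ℤ := g.val
  let ψ := conjPowHom (2 * k * D) c
  have lower := mul_norm_le_norm_conjPowHom (2 * k * D) (c := c)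
    (Nat.cast_injective.comp Fin.val_injective)
  have upper (v : FreeGroup (Fin r)) : (ψ v).norm ≤ 4 * k * D * v.norm :=
    (norm_conjPowHom_le _ (c := c) (fun g => g.isLt.le) v).trans (by gcongr; lia)
  refine ⟨ψ, injective_of_mul_norm_le hM lower,
    fun v => ⟨lower v, (upper v).trans (by gcongr; lia)⟩, ?_, Finset.sup_le fun i _ => ?_⟩
  · obtain ⟨i, -, hi⟩ := Finset.exists_mem_eq_sup Finset.univ ⟨⟨0, hk⟩, Finset.mem_univ _⟩
      fun i => (w i).norm
    calc 2 * k * D ^ 2 = 2 * k * D * (w i).norm := by rw [← hi, ← hD]; ring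
      _ ≤ (ψ (w i)).norm := lower (w i)
      _ ≤ _ := Finset.le_sup (f := fun i => (ψ (w i)).norm) (Finset.mem_univ i)
  · calc (ψ (w i)).norm ≤ 4 * k * D * D := (upper (w i)).trans (by gcongr; exact norm_w_le i)
      _ ≤ 7 * k * D ^ 2 := by lia
end

section
/- Let Γ be a simple graph on a finite vertex set V whose edge set is partitioned into two disjoint sets E(Γ) = E_d ⊔ E_c, satisfying: (i) whenever {x,y} ∈ E_c and {y,z} ∈ E_c with x ≠ z, also {x,z} ∈ E_c; and (ii) whenever {x,y} ∈ E_c, then for every vertex z ∉ {x,y} one has {x,z} ∈ E_d if and only if {y,z} ∈ E_d. For a set F of edges, call a subset S ⊆ V join-decomposable over F if S can be partitioned into two nonempty subsets S₁ and S₂ such that {s₁, s₂} ∈ F for every s₁ ∈ S₁ and s₂ ∈ S₂. Then: if S ⊆ V is join-decomposable over E(Γ) but not join-decomposable over E_d, every pair of distinct vertices of S is joined by an edge of E_c (i.e., S is a clique in the graph with edge set E_c). (This is the graph-theoretic content of the statement that an E_d-directly indecomposable canonical parabolic subgroup K^⊥ of the partially commutative group 𝔾(Γ) is either directly indecomposable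 or E_c-abelian.) -/
/-- A set `S` of vertices is join-decomposable over (the edge set of) a graph
`Gr` if it can be partitioned into two nonempty subsets `S₁`, `S₂` such that
every vertex of `S₁` is joined to every vertex of `S₂` by an edge of `Gr`. -/
def JoinDecomp {V : Type*} (Gr : SimpleGraph V) (S : Set V) : Prop :=
  ∃ S₁ S₂ : Set V, S₁.Nonempty ∧ S₂.Nonempty ∧ Disjoint S₁ S₂ ∧ S₁ ∪ S₂ = S ∧
    ∀ s₁ ∈ S₁, ∀ s₂ ∈ S₂, Gr.Adj s₁ s₂

/-!
Since `S` is not a join over `Gd`, every join decomposition of `S` over `Gd ⊔ Gc` is crossed by some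
`Gc`-edge `ab`, and each vertex of `S` is adjacent to `a` or to `b`. Let `K` be the `Gc`-component
of `a`, a clique by transitivity. A vertex of `S` outside `K` can be adjacent to `a` or `b` only in
`Gd`, hence is `Gd`-adjacent to all of `K`, whose vertices are twins in `Gd`. So `S` would be the
`Gd`-join of `S ∩ K` and `S \ K` unless `S ⊆ K`.
-/

section

variable {V : Type*} {G H : SimpleGraph V} {S K : Set V}

namespace JoinDecomp

theorem of_inter_sdiff (hin : (S ∩ K).Nonempty) (hout : (S \ K).Nonempty)
    (hadj : ∀ x ∈ S ∩ K, ∀ y ∈ S \ K, G.Adj x y) : JoinDecomp G S :=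
  ⟨S ∩ K, S \ K, hin, hout, Set.disjoint_sdiff_inter.symm, Set.inter_union_sdiff S K, hadj⟩

theorem exists_dominating_adj_of_sup (hsup : JoinDecomp (G ⊔ H) S) (hG : ¬ JoinDecomp G S) :
    ∃ a ∈ S, ∃ b ∈ S, H.Adj a b ∧ ∀ z ∈ S, (G ⊔ H).Adj a z ∨ (G ⊔ H).Adj b z := by
  obtain ⟨S₁, S₂, hne₁, hne₂, hdisj, rfl, hjoin⟩ := hsup
  obtain ⟨a, ha, b, hb, hab⟩ : ∃ a ∈ S₁, ∃ b ∈ S₂, H.Adj a b := by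
    by_contra! hno
    exact hG ⟨S₁, S₂, hne₁, hne₂, hdisj, rfl,
      fun a ha b hb => (hjoin a ha b hb).resolve_right (hno a ha b hb)⟩
  refine ⟨a, .inl ha, b, .inr hb, hab, ?_⟩
  rintro z (hz | hz)
  · exact .inr (hjoin z hz b hb).symm
  · exact .inl (hjoin a ha z hz)

end JoinDecomp

theorem adj_of_reachable_of_adj_trans
    (htrans : ∀ x y z : V, G.Adj x y → G.Adj y z → x ≠ z → G.Adj x z)
    {x y : V} (hxy : G.Reachable x y) (hne : x ≠ y) : G.Adj x y := by
  rw [SimpleGraph.reachable_iff_reflTransGen] at hxy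
  induction hxy with
  | refl => exact absurd rfl hne
  | @tail u v _ huv ih =>
    obtain rfl | hxu := eq_or_ne x u
    · exact huv
    · exact htrans x u v (ih hxu) huv hne

theorem isClique_supp_of_adj_trans
    (htrans : ∀ x y z : V, G.Adj x y → G.Adj y z → x ≠ z → G.Adj x z)
    (C : G.ConnectedComponent) : G.IsClique C.supp :=
  fun _ hx _ hy => adj_of_reachable_of_adj_trans htrans (C.reachable_of_mem_supp hx hy)

theorem adj_of_isClique_of_twins
    (htwin : ∀ x y z : V, H.Adj x y → z ≠ x → z ≠ y → (G.Adj x z ↔ G.Adj y z))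
    (hK : H.IsClique K) {x y z : V} (hx : x ∈ K) (hy : y ∈ K) (hz : z ∉ K)
    (hxz : G.Adj x z) : G.Adj y z := by
  obtain rfl | hxy := eq_or_ne x y
  · exact hxz
  · exact (htwin x y z (hK hx hy hxy) (ne_of_mem_of_not_mem hx hz).symm
      (ne_of_mem_of_not_mem hy hz).symm).1 hxz

end

theorem Ed_indecomposable_is_indecomposable_or_Ec_clique_general
    {V : Type*} {Gd Gc : SimpleGraph V}
    (hEc_trans : ∀ x y z : V, Gc.Adj x y → Gc.Adj y z → x ≠ z → Gc.Adj x z)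
    (hEc_Ed : ∀ x y z : V, Gc.Adj x y → z ≠ x → z ≠ y → (Gd.Adj x z ↔ Gd.Adj y z))
    {S : Set V} (hdec : JoinDecomp (Gd ⊔ Gc) S) (hnotdec : ¬ JoinDecomp Gd S) :
    Gc.IsClique S := by
  obtain ⟨a, haS, b, -, hab, hdom⟩ := hdec.exists_dominating_adj_of_sup hnotdec
  let C := Gc.connectedComponentMk a
  have haC : a ∈ C.supp := rfl
  have hbC : b ∈ C.supp := C.mem_supp_of_adj_mem_supp haC hab
  have hC : Gc.IsClique C.supp := isClique_supp_of_adj_trans hEc_trans C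
  suffices hSC : S ⊆ C.supp from hC.subset hSC
  by_contra hSC
  refine hnotdec (.of_inter_sdiff ⟨a, haS, haC⟩ (Set.sdiff_nonempty.2 hSC) ?_)
  rintro y ⟨-, hyC⟩ z ⟨hzS, hzC⟩
  obtain ⟨x, hxC, hxz⟩ : ∃ x ∈ C.supp, (Gd ⊔ Gc).Adj x z :=
    (hdom z hzS).elim (⟨a, haC, ·⟩) (⟨b, hbC, ·⟩)
  have hxz_Gd : Gd.Adj x z :=
    hxz.resolve_right fun hxz_Gc => hzC (C.mem_supp_of_adj_mem_supp hxC hxz_Gc)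
  exact adj_of_isClique_of_twins hEc_Ed hC hxC hyC hzC hxz_Gd

theorem Ed_indecomposable_is_indecomposable_or_Ec_clique
    {V : Type} [Fintype V] (Γ Gd Gc : SimpleGraph V)
    (hunion : Γ = Gd ⊔ Gc)
    (hdisj : ∀ x y : V, ¬ (Gd.Adj x y ∧ Gc.Adj x y))
    (hEc_trans : ∀ x y z : V, Gc.Adj x y → Gc.Adj y z → x ≠ z → Gc.Adj x z)
    (hEc_Ed : ∀ x y z : V, Gc.Adj x y → z ≠ x → z ≠ y → (Gd.Adj x z ↔ Gd.Adj y z))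
    (S : Set V)
    (hdec : JoinDecomp Γ S) (hnotdec : ¬ JoinDecomp Gd S) :
    ∀ x ∈ S, ∀ y ∈ S, x ≠ y → Gc.Adj x y := by
  subst hunion
  exact fun x hx y hy =>
    Ed_indecomposable_is_indecomposable_or_Ec_clique_general hEc_trans hEc_Ed hdec hnotdec hx hy
end
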